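/- arXiv:2209.12294 — 9 statements merged into one kernel-verified Lean document; each statement's English description precedes it below -/
import Mathlib

section
/- Let N be a positive integer, l a positive integer, p = 2l + 1, and let x_1 < x_2 < … < x_r (r > 1) be points in 𝕋 = (−π, π] with separation δ > 0. Then for every trigonometric polynomial s of degree at most N, ∑_{j=1}^r |s(x_j)|^p ≤ (p·N·σ(δ;N) · (1·3·5·⋯·(2l−1)) / (2^{l+1} · l!)) · ∫_𝕋 |s(x)|^p dx. -/
/-!
Let `p = 2 * l + 1` and `G u = ∑ j, ‖s (x j + u)‖ ^ p`, and let `G` be maximal at `u₀`. The left side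
of the inequality is `G 0 ≤ G u₀`, so it is enough to bound `G u₀`.

Put `S u = (s (x j + u₀ + u))_j`, a trigonometric polynomial of degree `N` with values in `ℓ^p`, whose
norm is maximal at `u = 0`. Testing the even part of `S` against the functional norming `S 0` gives
a scalar even trigonometric polynomial `q` with `|q| ≤ q 0`. By M. Riesz's comparison principle
`q u ≥ q 0 * cos (N * u)` for `|u| ≤ π / N` (`riesz_even`). In the variable `cos u` this says that
a polynomial bounded by `K` on `[-1, 1]` with value `K` at `1` dominates `K * T_N` near `1`; it
follows from Lagrange interpolation at the Chebyshev extremal points (`chebyshev_lower`). Hence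
`G u₀ * cos (N * u) ^ p ≤ (G (u₀ + u) + G (u₀ - u)) / 2` for `|u| ≤ π / (2 * N)` (`vector_riesz`).

Integrating over this range, the left side produces a Wallis integral, which is the constant in the
theorem (`integral_cos_mul_pow_odd`). The right side is the sum of the integrals of `‖s‖ ^ p` over
windows of length `π / N` about the points `x j + u₀`; these cover the circle at most
`σ = ⌈π / (N * δ)⌉` times (`sum_window_le`).
-/

open Real MeasureTheory Set

-- σ(δ;N): equals π/(Nδ) if that quantity is an integer, and 1 + ⌊π/(Nδ)⌋ otherwise.
open Classical in
noncomputable def sigmaDN (δ : ℝ) (N : ℕ) : ℝ :=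
  if ∃ z : ℤ, π / (N * δ) = (z : ℝ) then π / (N * δ) else 1 + ⌊π / (N * δ)⌋

/-! ### The comparison principle for polynomials -/

/-- A polynomial of degree at most `N` that is bounded by `K` on `[-1, 1]` and attains `K` at `1`
dominates `K * T_N` between the first two Chebyshev extremal points `cos (π / N)` and `1`. -/
lemma chebyshev_lower {N : ℕ} (hN : 0 < N) {P : Polynomial ℝ} (hdeg : P.degree ≤ N) {K : ℝ}
    (hb : ∀ y ∈ Icc (-1 : ℝ) 1, |P.eval y| ≤ K) (h1 : P.eval 1 = K) {u : ℝ} (hu0 : 0 ≤ u)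
    (hu : u ≤ π / N) : K * cos (N * u) ≤ P.eval (cos u) := by
  classical
  set Q : Polynomial ℝ := P - Polynomial.C K * Polynomial.Chebyshev.T ℝ N with hQ
  have hNR : (0 : ℝ) < N := by exact_mod_cast hN
  have hQd : Q.degree < (Finset.range (N + 1)).card := by
    rw [Finset.card_range]
    have h2 : (Polynomial.C K * Polynomial.Chebyshev.T ℝ (N : ℤ)).degree ≤ N := by
      rw [← Polynomial.smul_eq_C_mul]; refine (Polynomial.degree_smul_le _ _).trans ?_
      simp
    refine lt_of_le_of_lt ((Polynomial.degree_sub_le _ _).trans (max_le hdeg h2)) ?_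
    exact_mod_cast Nat.lt_succ_self N
  have key := Lagrange.eval_iterate_derivative_eq_sum
    (Polynomial.Chebyshev.strictAntiOn_node N).injOn hQd (k := 0) (by simp) (cos u)
  simp only [Function.iterate_zero, id, Nat.factorial_zero, Nat.cast_one, one_mul, zero_add] at key
  have hcos : (Polynomial.Chebyshev.T ℝ (N : ℤ)).eval (cos u) = cos (N * u) := by
    rw [Polynomial.Chebyshev.T_real_cos]; simp
  suffices h : 0 ≤ Q.eval (cos u) by
    rw [hQ] at h
    simp only [Polynomial.eval_sub, Polynomial.eval_mul, Polynomial.eval_C, hcos] at h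
    linarith
  rw [key]
  refine Finset.sum_nonneg fun i hi => ?_
  have hi' : i ≤ N := Nat.lt_succ_iff.mp (Finset.mem_range.mp hi)
  have hcard : (Finset.range (N + 1)).card - 1 = ((Finset.range (N + 1)).erase i).card := by
    rw [Finset.card_erase_of_mem hi]
  rw [hcard, Finset.powersetCard_self, Finset.sum_singleton]
  have hval : Q.eval (Polynomial.Chebyshev.node N i)
      = P.eval (Polynomial.Chebyshev.node N i) - K * (-1) ^ i := by
    rw [hQ]
    simp [Polynomial.Chebyshev.eval_T_real_node (Finset.mem_Iic.mpr hi')]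
  rw [hval]
  -- `Q` vanishes at the node `1`; at the node of index `i ≥ 1` both `(-1) ^ i * Q` and the
  -- numerator of the Lagrange basis polynomial are nonpositive.
  rcases Nat.eq_zero_or_pos i with rfl | hipos
  · rw [Polynomial.Chebyshev.node_eq_one, h1]; simp
  have hpos := Polynomial.Chebyshev.zero_lt_prod_node_sub_node hi'
  have hprod : ∏ a ∈ (Finset.range (N + 1)).erase i,
      (cos u - Polynomial.Chebyshev.node N a) ≤ 0 := by
    have h0 : 0 ∈ (Finset.range (N + 1)).erase i := by simp; omega
    rw [← Finset.mul_prod_erase _ _ h0, Polynomial.Chebyshev.node_eq_one]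
    refine mul_nonpos_of_nonpos_of_nonneg (by linarith [cos_le_one u]) ?_
    refine Finset.prod_nonneg fun a ha => ?_
    have ha0 : a ≠ 0 := Finset.ne_of_mem_erase ha
    have haN : a ≤ N := by
      have := Finset.mem_of_mem_erase (Finset.mem_of_mem_erase ha)
      exact Nat.lt_succ_iff.mp (Finset.mem_range.mp this)
    have ha1 : (1 : ℝ) ≤ a := by exact_mod_cast Nat.one_le_iff_ne_zero.mpr ha0
    have haN' : (a : ℝ) ≤ N := by exact_mod_cast haN
    rw [Polynomial.Chebyshev.node, sub_nonneg]
    refine cos_le_cos_of_nonneg_of_le_pi hu0 ?_ (hu.trans ?_)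
    · rw [div_le_iff₀ hNR]; nlinarith [pi_pos]
    · gcongr; nlinarith [pi_pos]
  have hsgn : (-1 : ℝ) ^ i * (P.eval (Polynomial.Chebyshev.node N i) - K * (-1) ^ i) ≤ 0 := by
    have h := hb _ (Polynomial.Chebyshev.node_mem_Icc (n := N) (i := i))
    rw [abs_le] at h
    rcases neg_one_pow_eq_or ℝ i with e | e <;> rw [e] <;> linarith
  have hrw : ∀ D V W : ℝ, V / D * W = ((-1) ^ i * V) * W / ((-1) ^ i * D) := by
    intro D V W
    rcases neg_one_pow_eq_or ℝ i with e | e <;> rw [e]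
    · simp [mul_div_right_comm]
    · rw [neg_one_mul, neg_one_mul, neg_mul, neg_div_neg_eq, mul_div_right_comm]
  rw [hrw]
  exact div_nonneg (mul_nonneg_of_nonpos_of_nonpos hsgn hprod) hpos.le

/-- M. Riesz's comparison principle for even trigonometric polynomials, here cosine polynomials
`q u = P (cos u)` with `P` expanded in Chebyshev polynomials. -/
lemma riesz_even {N : ℕ} (hN : 0 < N) (a : ℤ → ℝ) (q : ℝ → ℝ)
    (hq : ∀ u, q u = ∑ k ∈ Finset.Icc (-(N : ℤ)) (N : ℤ), a k * cos (k * u)) {K : ℝ}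
    (hb : ∀ u, |q u| ≤ K) (h0 : q 0 = K) {u : ℝ} (hu : |u| ≤ π / N) :
    K * cos (N * u) ≤ q u := by
  set P : Polynomial ℝ := ∑ k ∈ Finset.Icc (-(N : ℤ)) (N : ℤ),
    Polynomial.C (a k) * Polynomial.Chebyshev.T ℝ k with hP
  have hPe : ∀ v, P.eval (cos v) = q v := by
    intro v
    rw [hP, hq, Polynomial.eval_finsetSum]
    simp [Polynomial.Chebyshev.T_real_cos]
  have hdeg : P.degree ≤ N := by
    refine (Polynomial.degree_sum_le _ _).trans (Finset.sup_le fun k hk => ?_)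
    rw [← Polynomial.smul_eq_C_mul]; refine (Polynomial.degree_smul_le _ _).trans ?_
    rw [Polynomial.Chebyshev.degree_T]
    rw [Finset.mem_Icc] at hk
    exact_mod_cast (by omega : k.natAbs ≤ N)
  have h := chebyshev_lower hN hdeg (K := K) (fun y hy => by
    rw [← cos_arccos hy.1 hy.2, hPe]; exact hb _) (by rw [← cos_zero, hPe, h0]) (abs_nonneg u) hu
  rw [cos_abs, hPe] at h
  rcases abs_choice u with e | e <;> rw [e] at h
  · exact h
  · rwa [mul_neg, cos_neg] at h

/-! ### The comparison principle in `ℓ^p` -/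

/-- Young's inequality with natural exponents. -/
lemma young_nat (n : ℕ) {a b : ℝ} (ha : 0 ≤ a) (hb : 0 ≤ b) :
    (n + 1 : ℝ) * (b ^ n * a) ≤ n * b ^ (n + 1) + a ^ (n + 1) := by
  induction n with
  | zero => simp
  | succ n ih =>
    have h1 := mul_le_mul_of_nonneg_right ih hb
    have h2 : 0 ≤ (b ^ (n + 1) - a ^ (n + 1)) * (b - a) := by
      rcases le_total a b with h | h
      · exact mul_nonneg (sub_nonneg.mpr (pow_le_pow_left₀ ha h _)) (sub_nonneg.mpr h)
      · exact mul_nonneg_of_nonpos_of_nonpos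
          (sub_nonpos.mpr (pow_le_pow_left₀ hb h _)) (sub_nonpos.mpr h)
    push_cast
    rw [pow_succ b n] at *
    rw [pow_succ a (n + 1), pow_succ b (n + 1), pow_succ b n]
    nlinarith

/-- The comparison principle for the `ℓ^p`-valued trigonometric polynomial
`u ↦ (s (z j + u))_j` at a point where its norm is maximal. It is tested against the functional
norming the maximal vector, after symmetrization in `u`. -/
lemma vector_riesz {N : ℕ} (hN : 0 < N) (n r : ℕ) (z : Fin r → ℝ) (c : ℤ → ℂ) (s : ℝ → ℂ)
    (hs : ∀ y : ℝ, s y = ∑ k ∈ Finset.Icc (-(N : ℤ)) (N : ℤ),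
      c k * Complex.exp (Complex.I * (k : ℂ) * (y : ℂ)))
    (hmax : ∀ u, ∑ j, ‖s (z j + u)‖ ^ (n + 2) ≤ ∑ j, ‖s (z j)‖ ^ (n + 2))
    {u : ℝ} (hu : |u| ≤ π / (2 * N)) :
    (∑ j, ‖s (z j)‖ ^ (n + 2)) * cos (N * u) ^ (n + 2) ≤
      (∑ j, ‖s (z j + u)‖ ^ (n + 2) + ∑ j, ‖s (z j + -u)‖ ^ (n + 2)) / 2 := by
  set K := ∑ j, ‖s (z j)‖ ^ (n + 2) with hK
  have hNR : (0 : ℝ) < N := by exact_mod_cast hN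
  let A : Fin r → ℝ → ℂ := fun j u => (s (z j + u) + s (z j + -u)) / 2
  -- `b` pairs with `(s (z j))_j` to `K` and is, up to scaling, its norming functional in `ℓ^p`.
  let b : Fin r → ℂ := fun j => (starRingEnd ℂ) (s (z j)) * (‖s (z j)‖ : ℂ) ^ n
  have hA : ∀ j u, A j u = ∑ k ∈ Finset.Icc (-(N : ℤ)) (N : ℤ),
      (c k * Complex.exp (Complex.I * k * z j)) * ((cos (k * u) : ℝ) : ℂ) := by
    intro j u
    simp only [A, hs, ← Finset.sum_add_distrib, Finset.sum_div]
    refine Finset.sum_congr rfl fun k _ => ?_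
    push_cast
    rw [Complex.cos, mul_add, mul_add, Complex.exp_add, Complex.exp_add,
      show Complex.I * (k : ℂ) * u = k * u * Complex.I by ring,
      show Complex.I * (k : ℂ) * -u = -(k * u) * Complex.I by ring]
    ring
  have hAp : ∀ v, ∑ j, ‖A j v‖ ^ (n + 2) ≤
      (∑ j, ‖s (z j + v)‖ ^ (n + 2) + ∑ j, ‖s (z j + -v)‖ ^ (n + 2)) / 2 := by
    intro v
    rw [← Finset.sum_add_distrib, Finset.sum_div]
    refine Finset.sum_le_sum fun j _ => ?_
    have h1 : ‖A j v‖ ≤ (‖s (z j + v)‖ + ‖s (z j + -v)‖) / 2 := by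
      simp only [A, norm_div, Complex.norm_ofNat]
      gcongr
      exact norm_add_le _ _
    refine (pow_le_pow_left₀ (norm_nonneg _) h1 _).trans ?_
    have h2 := add_pow_le (norm_nonneg (s (z j + v))) (norm_nonneg (s (z j + -v))) (n + 2)
    rw [div_pow, div_le_div_iff₀ (by positivity) (by positivity)]
    rw [show n + 2 - 1 = n + 1 by omega] at h2
    rw [pow_succ 2 (n + 1)]
    nlinarith
  have hAK : ∀ v, ∑ j, ‖A j v‖ ^ (n + 2) ≤ K := fun v => by
    linarith [hAp v, hmax v, hmax (-v)]
  have hbn : ∀ j, ‖b j‖ = ‖s (z j)‖ ^ (n + 1) := by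
    intro j
    simp [b, pow_succ, mul_comm]
  let q : ℝ → ℝ := fun u => ∑ j, (b j * A j u).re
  have hqle : ∀ v, |q v| ≤ ∑ j, ‖s (z j)‖ ^ (n + 1) * ‖A j v‖ := by
    intro v
    refine (Finset.abs_sum_le_sum_abs _ _).trans (Finset.sum_le_sum fun j _ => ?_)
    refine (Complex.abs_re_le_norm _).trans ?_
    rw [norm_mul, hbn]
  -- The factor `t` makes Young's inequality sharp where `‖A j v‖ = t * ‖s (z j)‖`: it is used with
  -- `t = 1` to bound `q`, and with `t = cos (N * u)` for the lower bound.
  have hyoung : ∀ t : ℝ, 0 ≤ t → ∀ v, (n + 2 : ℝ) * (t ^ (n + 1) * |q v|) ≤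
      (n + 1) * (t ^ (n + 2) * K) + ∑ j, ‖A j v‖ ^ (n + 2) := by
    intro t ht v
    calc (n + 2 : ℝ) * (t ^ (n + 1) * |q v|)
        ≤ (n + 2 : ℝ) * (t ^ (n + 1) * ∑ j, ‖s (z j)‖ ^ (n + 1) * ‖A j v‖) := by
          gcongr; exact hqle v
      _ = ∑ j, (n + 2 : ℝ) * ((t * ‖s (z j)‖) ^ (n + 1) * ‖A j v‖) := by
          rw [Finset.mul_sum, Finset.mul_sum]
          refine Finset.sum_congr rfl fun j _ => ?_
          rw [mul_pow]; ring
      _ ≤ ∑ j, ((n + 1) * (t * ‖s (z j)‖) ^ (n + 2) + ‖A j v‖ ^ (n + 2)) := by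
          refine Finset.sum_le_sum fun j _ => ?_
          have := young_nat (n + 1) (norm_nonneg (A j v)) (mul_nonneg ht (norm_nonneg (s (z j))))
          push_cast at this
          rw [show (n : ℝ) + 1 + 1 = n + 2 by ring] at this
          exact this
      _ = _ := by
          rw [Finset.sum_add_distrib, hK, Finset.mul_sum, Finset.mul_sum]
          simp only [mul_pow]
  have hqK : ∀ v, |q v| ≤ K := by
    intro v
    have h := hyoung 1 zero_le_one v
    simp only [one_pow, one_mul] at h
    have h2 := hAK v
    have h3 : (0 : ℝ) < n + 2 := by positivity
    nlinarith
  have hq0 : q 0 = K := by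
    simp only [q, A, b, hK, neg_zero, add_zero]
    refine Finset.sum_congr rfl fun j _ => ?_
    rw [add_self_div_two, mul_right_comm, ← Complex.normSq_eq_conj_mul_self,
      Complex.normSq_eq_norm_sq]
    norm_cast
    ring
  have hqs : ∀ v, q v = ∑ k ∈ Finset.Icc (-(N : ℤ)) (N : ℤ),
      (∑ j, (b j * (c k * Complex.exp (Complex.I * k * z j))).re) * cos (k * v) := by
    intro v
    simp only [q, hA, Finset.mul_sum, Complex.re_sum, Finset.sum_mul]
    rw [Finset.sum_comm]
    refine Finset.sum_congr rfl fun k _ => Finset.sum_congr rfl fun j _ => ?_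
    rw [← mul_assoc, Complex.re_mul_ofReal]
  have hle : π / (2 * N) ≤ π / N := by
    gcongr; linarith
  have hlow := riesz_even hN _ q hqs hqK hq0 (hu.trans hle)
  have hcos : 0 ≤ cos (N * u) := by
    have h2 : |N * u| ≤ π / 2 := by
      rw [abs_mul, abs_of_pos hNR]
      calc (N : ℝ) * |u| ≤ N * (π / (2 * N)) := by gcongr
        _ = π / 2 := by field_simp
    rw [abs_le] at h2
    exact cos_nonneg_of_mem_Icc ⟨by linarith [h2.1], h2.2⟩
  refine le_trans ?_ (hAp u)
  have h := hyoung _ hcos u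
  have h4 : (n + 2 : ℝ) * (cos (N * u) ^ (n + 1) * (K * cos (N * u))) ≤
      (n + 2 : ℝ) * (cos (N * u) ^ (n + 1) * |q u|) := by
    gcongr
    exact hlow.trans (le_abs_self _)
  rw [pow_succ (cos (N * u)) (n + 1)] at *
  linarith

/-! ### Counting overlapping windows -/

lemma sum_shift_sub (φ : ℕ → ℝ) (r S : ℕ) :
    ∑ k ∈ Finset.range r, (φ (k + S) - φ k) = ∑ k ∈ Finset.range S, (φ (k + r) - φ k) := by
  have h1 := Finset.sum_range_add φ r S
  have h2 := Finset.sum_range_add φ S r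
  rw [add_comm S r] at h2
  simp only [Finset.sum_sub_distrib]
  simp only [add_comm _ r, add_comm _ S]
  linarith

/-- Windows of half-width `h` about the nodes of a cyclically `δ`-separated configuration cover the
circle at most `S` times as soon as `2 * h ≤ S * δ`. The configuration is unrolled to a sequence
`X` on the line with `X (k + r) = X k + 2 * π`; then `X (k + S) - h ≥ X k + h`, and the sum of the
integrals over the `[X k - h, X (k + S) - h]` telescopes to `S` full periods. -/
lemma sum_window_le (w : ℝ → ℝ) (hw : Continuous w) (hw0 : ∀ y, 0 ≤ w y)
    (hper : Function.Periodic w (2 * π)) (r : ℕ) (X : ℕ → ℝ) (δ h : ℝ) (S : ℕ)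
    (hX : ∀ k, δ ≤ X (k + 1) - X k) (hXr : ∀ k, X (k + r) = X k + 2 * π)
    (hS : 2 * h ≤ S * δ) (v : ℝ) :
    ∑ k ∈ Finset.range r, ∫ y in (X k + v - h)..(X k + v + h), w y ≤
      S * ∫ y in (-π)..π, w y := by
  have hint : ∀ a b, IntervalIntegrable w volume a b := fun a b => hw.intervalIntegrable a b
  let φ : ℕ → ℝ := fun k => ∫ y in (0 : ℝ)..(X k + v - h), w y
  have hstep : ∀ m k, m * δ ≤ X (k + m) - X k := by
    intro m k
    induction m with
    | zero => simp
    | succ m ih =>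
      have := hX (k + m)
      rw [← add_assoc]
      push_cast
      linarith
  have hφ : ∀ k, ∫ y in (X k + v - h)..(X k + v + h), w y ≤ φ (k + S) - φ k := by
    intro k
    have e : φ (k + S) - φ k = ∫ y in (X k + v - h)..(X (k + S) + v - h), w y :=
      intervalIntegral.integral_interval_sub_left (hint _ _) (hint _ _)
    have e2 := intervalIntegral.integral_add_adjacent_intervals
      (hint (X k + v - h) (X k + v + h)) (hint (X k + v + h) (X (k + S) + v - h))
    have : 0 ≤ ∫ y in (X k + v + h)..(X (k + S) + v - h), w y :=
      intervalIntegral.integral_nonneg (by linarith [hstep S k]) fun y _ => hw0 y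
    linarith
  refine (Finset.sum_le_sum fun k _ => hφ k).trans ?_
  rw [sum_shift_sub]
  refine le_of_eq ?_
  have hφr : ∀ k ∈ Finset.range S, φ (k + r) - φ k = ∫ y in (-π)..π, w y := by
    intro k _
    have e : φ (k + r) - φ k = ∫ y in (X k + v - h)..(X (k + r) + v - h), w y :=
      intervalIntegral.integral_interval_sub_left (hint _ _) (hint _ _)
    have h2 := hper.intervalIntegral_add_eq (X k + v - h) (-π)
    rw [show -π + 2 * π = π by ring] at h2
    rw [e, hXr, ← h2]
    congr 1
    ring
  rw [Finset.sum_congr rfl hφr]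
  simp

/-- `σ(δ; N)` is a natural number, and at least `π / (N * δ)`: these are the two properties of this
ceiling that the window count needs. -/
lemma sigmaDN_spec {δ : ℝ} (hδ : 0 < δ) {N : ℕ} (hN : 0 < N) :
    ∃ S : ℕ, sigmaDN δ N = S ∧ π / N ≤ S * δ := by
  have hNR : (0 : ℝ) < N := by exact_mod_cast hN
  have hpos : 0 < π / (N * δ) := by positivity
  have key : ∀ t : ℝ, π / (N * δ) ≤ t → π / N ≤ t * δ := by
    intro t ht
    rw [div_le_iff₀ (by positivity)] at ht
    rw [div_le_iff₀ hNR]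
    linarith
  unfold sigmaDN
  split_ifs with hz
  · obtain ⟨z, hz⟩ := hz
    have hz0 : 0 ≤ z := by
      rw [hz] at hpos
      exact_mod_cast hpos.le
    lift z to ℕ using hz0
    refine ⟨z, by rw [hz]; simp, key _ (by rw [hz]; simp)⟩
  · refine ⟨1 + ⌊π / (N * δ)⌋₊, ?_, key _ ?_⟩
    · push_cast
      rw [natCast_floor_eq_intCast_floor hpos.le]
    · push_cast
      linarith [Nat.lt_floor_add_one (π / (N * δ))]

/-! ### The constant -/

lemma integral_cos_mul_pow_odd {N : ℕ} (hN : 0 < N) (l : ℕ) :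
    ∫ u in (-(π / (2 * N)))..(π / (2 * N)), cos (N * u) ^ (2 * l + 1) =
      2 ^ (l + 1) * (Nat.factorial l) /
        (((2 * l + 1 : ℕ) : ℝ) * N * ∏ i ∈ Finset.range l, ((2 * i + 1 : ℕ) : ℝ)) := by
  have hNR : (0 : ℝ) < N := by exact_mod_cast hN
  have h1 : ∫ u in (-(π / (2 * N)))..(π / (2 * N)), cos (N * u) ^ (2 * l + 1) =
      (N : ℝ)⁻¹ * ∫ y in (0 : ℝ)..π, sin y ^ (2 * l + 1) := by
    have h2 : ∀ u : ℝ, cos (N * u) ^ (2 * l + 1) = sin (N * u + π / 2) ^ (2 * l + 1) := by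
      intro u; rw [sin_add_pi_div_two]
    simp only [h2]
    rw [intervalIntegral.integral_comp_mul_add (fun y => sin y ^ (2 * l + 1)) hNR.ne']
    rw [smul_eq_mul]
    congr 2
    · field_simp; ring
    · field_simp; ring
  rw [h1, integral_sin_pow_odd]
  have hprod : ∀ m : ℕ, (∏ i ∈ Finset.range m, (2 * (i : ℝ) + 2) / (2 * i + 3)) *
      (((2 * m + 1 : ℕ) : ℝ) * ∏ i ∈ Finset.range m, ((2 * i + 1 : ℕ) : ℝ)) =
      2 ^ m * Nat.factorial m := by
    intro m
    induction m with
    | zero => simp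
    | succ m ih =>
      rw [Finset.prod_range_succ, Finset.prod_range_succ, Nat.factorial_succ]
      have h3 : (2 * (m : ℝ) + 3) ≠ 0 := by positivity
      push_cast at ih ⊢
      calc _ = ((∏ i ∈ Finset.range m, (2 * (i : ℝ) + 2) / (2 * i + 3)) *
            ((2 * (m : ℝ) + 1) * ∏ i ∈ Finset.range m, (2 * (i : ℝ) + 1))) * (2 * m + 2) := by
            field_simp; ring
        _ = _ := by rw [ih]; ring
  have hPpos : (0 : ℝ) < ∏ i ∈ Finset.range l, ((2 * i + 1 : ℕ) : ℝ) :=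
    Finset.prod_pos fun i _ => by positivity
  have hp : (0 : ℝ) < ((2 * l + 1 : ℕ) : ℝ) := by positivity
  rw [eq_div_iff (by positivity), pow_succ, mul_right_comm _ 2, ← hprod l]
  field_simp

/-! ### The large sieve inequality -/

theorem large_sieve_Lp_odd
    (N : ℕ) (hN : 0 < N) (l : ℕ) (hl : 0 < l) (p : ℕ) (hp : p = 2 * l + 1)
    (r : ℕ) (hr : 1 < r) (x : Fin r → ℝ)
    (hmem : ∀ j, x j ∈ Ioc (-π) π) (hmono : StrictMono x)
    (δ : ℝ) (hδ : 0 < δ)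
    (hsep : ∀ j : ℕ, ∀ h : j + 1 < r, δ ≤ x ⟨j + 1, h⟩ - x ⟨j, by omega⟩)
    (hwrap : δ ≤ 2 * π - (x ⟨r - 1, by omega⟩ - x ⟨0, by omega⟩))
    (c : ℤ → ℂ) (s : ℝ → ℂ)
    (hs : ∀ y : ℝ, s y = ∑ k ∈ Finset.Icc (-(N : ℤ)) (N : ℤ),
      c k * Complex.exp (Complex.I * (k : ℂ) * (y : ℂ))) :
    ∑ j, ‖s (x j)‖ ^ p ≤
      (p : ℝ) * N * sigmaDN δ N * (∏ i ∈ Finset.range l, ((2 * i + 1 : ℕ) : ℝ)) /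
        (2 ^ (l + 1) * (Nat.factorial l)) *
        ∫ y in Ioc (-π) π, ‖s y‖ ^ p := by
  subst hp
  have hNR : (0 : ℝ) < N := by exact_mod_cast hN
  obtain ⟨n, hn⟩ : ∃ n, 2 * l + 1 = n + 2 := ⟨2 * l - 1, by omega⟩
  obtain ⟨S, hS, hSδ⟩ := sigmaDN_spec hδ hN
  set h : ℝ := π / (2 * N) with hh
  have hhpos : 0 < h := by positivity
  have h2h : 2 * h = π / N := by rw [hh]; field_simp
  have hscont : Continuous s := by
    rw [funext hs]; fun_prop
  have hsper : Function.Periodic s (2 * π) := by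
    intro y
    rw [hs, hs]
    refine Finset.sum_congr rfl fun k _ => ?_
    congr 1
    push_cast
    rw [show Complex.I * (k : ℂ) * (y + 2 * π) = Complex.I * k * y + k * (2 * π * Complex.I) by
      ring, Complex.exp_add, Complex.exp_int_mul_two_pi_mul_I, mul_one]
  let w : ℝ → ℝ := fun y => ‖s y‖ ^ (2 * l + 1)
  have hwc : Continuous w := by fun_prop
  have hw0 : ∀ y, 0 ≤ w y := fun y => by positivity
  have hwper : Function.Periodic w (2 * π) := fun y => by simp only [w, hsper y]
  let G : ℝ → ℝ := fun u => ∑ j, w (x j + u)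
  have hGc : Continuous G := by fun_prop
  have hGper : Function.Periodic G (2 * π) := fun u => by
    simp only [G, ← add_assoc, hwper _]
  obtain ⟨u₀, -, hu₀⟩ := isCompact_Icc.exists_isMaxOn (s := Icc (0 : ℝ) (2 * π))
    ⟨0, by simp [pi_pos.le]⟩ hGc.continuousOn
  have hmax : ∀ u, G u ≤ G u₀ := by
    intro u
    obtain ⟨v, hv, e⟩ := hGper.exists_mem_Ico₀ two_pi_pos u
    rw [e]
    exact hu₀ ⟨hv.1, hv.2.le⟩
  have hpt : ∀ u, |u| ≤ h →
      G u₀ * cos (N * u) ^ (2 * l + 1) ≤ (G (u₀ + u) + G (u₀ + -u)) / 2 := by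
    intro u hu
    have := vector_riesz hN n r (fun j => x j + u₀) c s hs (by
      intro v
      have := hmax (u₀ + v)
      simpa only [G, w, hn, add_assoc] using this) hu
    simpa only [G, w, hn, add_assoc] using this
  have hcosc : Continuous fun u : ℝ => cos (N * u) ^ (2 * l + 1) := by fun_prop
  have hG1 : Continuous fun u => G (u₀ + u) := by fun_prop
  have hG2 : Continuous fun u => G (u₀ + -u) := by fun_prop
  have hintle : G u₀ * ∫ u in (-h)..h, cos (N * u) ^ (2 * l + 1) ≤
      ∫ u in (-h)..h, G (u₀ + u) := by
    have h1 : ∫ u in (-h)..h, G u₀ * cos (N * u) ^ (2 * l + 1) ≤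
        ∫ u in (-h)..h, (G (u₀ + u) + G (u₀ + -u)) / 2 := by
      refine intervalIntegral.integral_mono_on (by linarith)
        (Continuous.intervalIntegrable (by fun_prop) _ _)
        (Continuous.intervalIntegrable (by fun_prop) _ _) fun u hu => hpt u (abs_le.mpr hu)
    rw [intervalIntegral.integral_const_mul, intervalIntegral.integral_div,
      intervalIntegral.integral_add (hG1.intervalIntegrable _ _) (hG2.intervalIntegrable _ _),
      intervalIntegral.integral_comp_neg (fun u => G (u₀ + u)), neg_neg] at h1
    linarith
  have hr0 : 0 < r := by omega
  -- The cyclic configuration unrolled along the line; `hwrap` gives the gap between two turns.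
  let X : ℕ → ℝ := fun k => x ⟨k % r, Nat.mod_lt _ hr0⟩ + 2 * π * (k / r : ℕ)
  have hXr : ∀ k, X (k + r) = X k + 2 * π := by
    intro k
    simp only [X, Nat.add_mod_right, Nat.add_div_right k hr0]
    push_cast
    ring
  have hX : ∀ k, δ ≤ X (k + 1) - X k := by
    intro k
    have hlt := Nat.mod_lt k hr0
    have hk := Nat.div_add_mod k r
    rcases Nat.lt_or_ge (k % r + 1) r with hc | hc
    · have e1 : (k + 1) % r = k % r + 1 := by
        conv_lhs => rw [← hk, add_assoc, Nat.mul_add_mod, Nat.mod_eq_of_lt hc]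
      have e2 : (k + 1) / r = k / r := by
        conv_lhs => rw [← hk, add_assoc, Nat.mul_add_div hr0, Nat.div_eq_of_lt hc, add_zero]
      simp only [X, e1, e2]
      linarith [hsep (k % r) hc]
    · have e0 : k % r = r - 1 := by omega
      have e : k + 1 = r * (k / r + 1) := by rw [mul_add]; omega
      have e1 : (k + 1) % r = 0 := by rw [e, Nat.mul_mod_right]
      have e2 : (k + 1) / r = k / r + 1 := by rw [e, Nat.mul_div_cancel_left _ hr0]
      simp only [X, e0, e1, e2]
      push_cast
      linarith
  have hwin := sum_window_le w hwc hw0 hwper r X δ h S hX hXr (by rw [h2h]; exact hSδ) u₀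
  have hsum : ∫ u in (-h)..h, G (u₀ + u) =
      ∑ k ∈ Finset.range r, ∫ y in (X k + u₀ - h)..(X k + u₀ + h), w y := by
    simp only [G]
    rw [intervalIntegral.integral_finsetSum fun j _ =>
      Continuous.intervalIntegrable (by fun_prop) _ _, Finset.sum_range]
    refine Finset.sum_congr rfl fun j _ => ?_
    have hXj : X j = x j := by
      simp [X, Nat.mod_eq_of_lt j.2, Nat.div_eq_of_lt j.2]
    simp only [← add_assoc]
    rw [hXj, intervalIntegral.integral_comp_add_left w (x j + u₀), ← sub_eq_add_neg]
  have hfin : G u₀ * ∫ u in (-h)..h, cos (N * u) ^ (2 * l + 1) ≤ S * ∫ y in (-π)..π, w y :=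
    hintle.trans (hsum.trans_le hwin)
  have hG0 : ∑ j, ‖s (x j)‖ ^ (2 * l + 1) ≤ G u₀ := by
    simpa only [G, w, add_zero] using hmax 0
  rw [hh, integral_cos_mul_pow_odd hN l, intervalIntegral.integral_of_le (by linarith [pi_pos])] at hfin
  rw [hS]
  refine hG0.trans ?_
  have hPpos : (0 : ℝ) < ∏ i ∈ Finset.range l, ((2 * i + 1 : ℕ) : ℝ) :=
    Finset.prod_pos fun i _ => by positivity
  have hDpos : (0 : ℝ) < ((2 * l + 1 : ℕ) : ℝ) * N *
      ∏ i ∈ Finset.range l, ((2 * i + 1 : ℕ) : ℝ) := by positivity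
  have hFpos : (0 : ℝ) < 2 ^ (l + 1) * (Nat.factorial l) := by positivity
  rw [mul_div_assoc', div_le_iff₀ hDpos] at hfin
  rw [div_mul_eq_mul_div, le_div_iff₀ hFpos]
  refine hfin.trans (le_of_eq ?_)
  ring
end

section
/- Let N be a positive integer, p ≥ 1, and let x_1 < x_2 < … < x_r (r > 1) be points in 𝕋 = (−π, π] with separation δ > 0 such that π/(Nδ) is not an integer. Then for every trigonometric polynomial s of degree at most N with ‖s‖_{L^p(𝕋)} = 1, ∑_{j=1}^r |s(x_j)|^p < (p + 1)(N/π + 1/δ). -/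
/-!
The proof rests on a mean value inequality adapted to exponential growth. For `a ≥ 0`,

  `2π e^{-pNa} |s(x)|^p ≤ ∫_0^{2π} |s(x + a / cos θ)|^p dθ`.

It comes from the plane slit along the real rays `|z| ≥ a`: there `s(x + z) exp (-N √(a² - z²))` is
bounded and analytic, harmonic measure at `0` is the law of `a / cos θ` with `θ` uniform, and the
exponential factor has modulus one on the slits. Because `p ≥ 1`, the case `p = 1` and Jensen's
inequality suffice (`integral_exp_sec_tan`, `norm_mean_value`, `rpow_mean_value`).

Integrate this over `0 ≤ a ≤ A` and sum over the points. Exchanging the integrals, the integral in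
`a` for fixed `θ` becomes `cos θ` times an integral of `|s|^p` over a window of half-width
`A / cos θ` around `x_j`. Windows of half-width `B` around `δ`-separated points overlap at most
`1 + 2B/δ` times (`sum_window_le`), so the sum over `j` is at most `(cos θ + 2A/δ) ∫ |s|^p`.
Integrating in `θ` over `(-π/2, π/2)` gives `sieve_inequality`,

  `2π (1 - e^{-pNA}) / (pN) · ∑ |s(x_j)|^p ≤ (2 + 2πA/δ) ∫ |s|^p`.

The choice `A = log (p + 1) / (pN)` turns this into the bound
`(p + 1) (N/π + log (p + 1) / (p δ))`, and `log (p + 1) < p`.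
-/

open Real MeasureTheory Set

/-! ### An exponential mean value identity on a slit plane -/

lemma cayley_re_nonneg (w : ℂ) (hw : ‖w‖ < 1) : 0 ≤ ((1 + w) / (1 - w)).re := by
  have h1 : w.re ^ 2 + w.im ^ 2 < 1 := by
    have := Complex.sq_norm w
    rw [Complex.normSq_apply] at this
    nlinarith [norm_nonneg w]
  rw [Complex.div_re, ← add_div]
  apply div_nonneg _ (Complex.normSq_nonneg _)
  simp
  nlinarith

lemma ae_cos_ne_zero : ∀ᵐ θ : ℝ, cos θ ≠ 0 := by
  have : Set.Countable {θ : ℝ | cos θ = 0} := by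
    have : {θ : ℝ | cos θ = 0} ⊆ Set.range (fun k : ℤ => (2 * k + 1) * π / 2) := by
      intro θ h
      obtain ⟨k, hk⟩ := Real.cos_eq_zero_iff.1 h
      exact ⟨k, hk.symm⟩
    exact (Set.countable_range _).mono this
  exact this.ae_notMem volume

/-- With `α = a (M - k) / 2` and `β = a (M + k) / 2`, this is the pull-back of
`z ↦ exp (i k z - M √(a² - z²))` from the plane slit along the real rays `|z| ≥ a` to the unit disc,
under the conformal map `ζ ↦ 2 a ζ / (1 + ζ²)`. The exponent is written through the two Cayley
transforms of `± i ζ`, each of which has nonnegative real part on the disc. -/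
noncomputable def discExp (α β : ℝ) (ζ : ℂ) : ℂ :=
  Complex.exp (-(α * ((1 + Complex.I * ζ) / (1 - Complex.I * ζ)) +
    β * ((1 - Complex.I * ζ) / (1 + Complex.I * ζ))))

lemma one_add_ne {w : ℂ} (hw : ‖w‖ < 1) : 1 + w ≠ 0 := by
  intro h
  have : w = -1 := by linear_combination h
  simp [this] at hw

lemma one_sub_ne {w : ℂ} (hw : ‖w‖ < 1) : 1 - w ≠ 0 := by
  have := one_add_ne (w := -w) (by simpa using hw)
  rwa [← sub_eq_add_neg] at this

lemma norm_discExp_le {α β : ℝ} (hα : 0 ≤ α) (hβ : 0 ≤ β) {ζ : ℂ} (hζ : ‖ζ‖ < 1) :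
    ‖discExp α β ζ‖ ≤ 1 := by
  rw [discExp, Complex.norm_exp, Real.exp_le_one_iff]
  have h1 := cayley_re_nonneg (Complex.I * ζ) (by simpa using hζ)
  have h2 := cayley_re_nonneg (-(Complex.I * ζ)) (by simpa using hζ)
  rw [sub_neg_eq_add, ← sub_eq_add_neg] at h2
  simp only [Complex.neg_re, Complex.add_re, Complex.re_ofReal_mul]
  nlinarith [mul_nonneg hα h1, mul_nonneg hβ h2]

lemma differentiableAt_discExp (α β : ℝ) {ζ : ℂ} (h1 : 1 - Complex.I * ζ ≠ 0)
    (h2 : 1 + Complex.I * ζ ≠ 0) : DifferentiableAt ℂ (discExp α β) ζ := by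
  unfold discExp
  fun_prop (disch := assumption)

/-- On the unit circle away from `± i`, the slit map takes `e^{iθ}` to the real point `a / cos θ`
and `√(a² - z²)` becomes the imaginary number `-i a tan θ`. -/
lemma discExp_boundary (α β θ : ℝ) (hθ : cos θ ≠ 0) :
    discExp α β (Complex.exp (θ * Complex.I)) =
      Complex.exp (Complex.I * (β - α : ℝ) * ((1 / cos θ : ℝ) : ℂ)) *
        Complex.exp (Complex.I * ((α + β : ℝ) : ℂ) * ((tan θ : ℝ) : ℂ)) ∧
    1 - Complex.I * Complex.exp (θ * Complex.I) ≠ 0 ∧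
    1 + Complex.I * Complex.exp (θ * Complex.I) ≠ 0 := by
  have hI := Complex.I_sq
  have hc : (Complex.cos θ) ≠ 0 := by
    rw [← Complex.ofReal_cos]; exact_mod_cast hθ
  have hsc := Complex.sin_sq_add_cos_sq (θ : ℂ)
  set C := Complex.cos (θ : ℂ) with hC
  set S := Complex.sin (θ : ℂ) with hS
  set I := Complex.I with hIdef
  have key : (1 - I * (C + S * I)) * (1 + I * (C + S * I)) = 2 * C * (C + S * I) := by
    linear_combination (-C^2 - 2 * C * S * I - S^2 * I^2 + S^2) * hI - hsc
  have hexp : Complex.exp (θ * I) = C + S * I := Complex.exp_mul_I _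
  have hne : C + S * I ≠ 0 := hexp ▸ Complex.exp_ne_zero _
  have hprod : (1 - I * (C + S * I)) * (1 + I * (C + S * I)) ≠ 0 := by
    rw [key]; simp [hc, hne]
  have h1 := left_ne_zero_of_mul hprod
  have h2 := right_ne_zero_of_mul hprod
  refine ⟨?_, by rwa [hexp], by rwa [hexp]⟩
  rw [discExp, ← Complex.exp_add, hexp]
  have e1 : (1 + I * (C + S * I)) / (1 - I * (C + S * I)) = I * (1 / C) - I * (S / C) := by
    rw [div_eq_iff h1]
    field_simp
    linear_combination (C + I * S - I * S ^ 2) * hI + I * hsc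
  have e2 : (1 - I * (C + S * I)) / (1 + I * (C + S * I)) = -I * (1 / C) - I * (S / C) := by
    rw [div_eq_iff h2]
    field_simp
    linear_combination (C + I * S + I * S ^ 2) * hI - I * hsc
  congr 1
  rw [e1, e2]
  push_cast [Complex.tan_eq_sin_div_cos]
  rw [← hC, ← hS]
  ring

/-- The mean value property of `discExp` at `ζ = 0`, carried to the unit circle itself. The two
essential singularities `± i` on the circle are harmless, since `discExp` is bounded by `1` in the
disc: let the radius tend to `1` under dominated convergence. -/
lemma integral_exp_sec_tan (a k M : ℝ) (ha : 0 ≤ a) (hk : |k| ≤ M) :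
    ∫ θ in (0:ℝ)..(2 * π), Complex.exp (Complex.I * k * ((a / cos θ : ℝ) : ℂ)) *
        Complex.exp (Complex.I * ((M * a : ℝ) : ℂ) * ((tan θ : ℝ) : ℂ)) =
      2 * π * Complex.exp (-(M * a : ℝ)) := by
  obtain ⟨hk1, hk2⟩ := abs_le.1 hk
  set α := (M - k) / 2 * a with hα
  set β := (M + k) / 2 * a with hβ
  have hα0 : 0 ≤ α := mul_nonneg (by linarith) ha
  have hβ0 : 0 ≤ β := mul_nonneg (by linarith) ha
  have hev : ∀ᶠ R : ℝ in nhdsWithin 1 (Iio 1), R ∈ Ioo (0:ℝ) 1 :=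
    Ioo_mem_nhdsLT (by norm_num)
  have hnorm : ∀ R ∈ Ioo (0:ℝ) 1, ∀ θ, ‖circleMap 0 R θ‖ < 1 := by
    intro R hR θ
    simp [abs_of_pos hR.1, hR.2]
  have hmean : ∀ R ∈ Ioo (0:ℝ) 1, ∫ θ in (0:ℝ)..(2 * π), discExp α β (circleMap 0 R θ) =
      2 * π * Complex.exp (-(M * a : ℝ)) := by
    intro R hR
    have hdiff : ∀ z ∈ Metric.closedBall (0:ℂ) |R|, DifferentiableAt ℂ (discExp α β) z := by
      intro z hz
      have hz' : ‖Complex.I * z‖ < 1 := by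
        have : ‖z‖ ≤ R := by simpa [abs_of_pos hR.1] using hz
        simpa using this.trans_lt hR.2
      exact differentiableAt_discExp α β (one_sub_ne hz') (one_add_ne hz')
    have := circleAverage_of_differentiable_on_off_countable (f := discExp α β) (c := 0) (R := R)
      countable_empty (fun z hz => (hdiff z hz).continuousAt.continuousWithinAt)
      (fun z hz => hdiff z (Metric.ball_subset_closedBall hz.1))
    rw [Real.circleAverage_def] at this
    -- `discExp` at the centre is `exp (-(α + β))`, and `α + β = M a`.
    have h0 : discExp α β 0 = Complex.exp (-(M * a : ℝ)) := by
      simp only [discExp, hα, hβ]; congr 1; push_cast; simp; ring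
    rw [h0] at this
    rw [← this]
    have hpi : (π : ℂ) ≠ 0 := by exact_mod_cast pi_ne_zero
    simp
    field_simp
  have hlim : Filter.Tendsto (fun R : ℝ => ∫ θ in (0:ℝ)..(2 * π), discExp α β (circleMap 0 R θ))
      (nhdsWithin 1 (Iio 1)) (nhds (∫ θ in (0:ℝ)..(2 * π),
        Complex.exp (Complex.I * k * ((a / cos θ : ℝ) : ℂ)) *
        Complex.exp (Complex.I * ((M * a : ℝ) : ℂ) * ((tan θ : ℝ) : ℂ)))) := by
    apply intervalIntegral.tendsto_integral_filter_of_dominated_convergence (fun _ => 1)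
    · filter_upwards [hev] with R hR
      apply Continuous.aestronglyMeasurable
      rw [continuous_iff_continuousAt]
      intro θ
      have hz' : ‖Complex.I * circleMap 0 R θ‖ < 1 := by simpa using hnorm R hR θ
      exact (differentiableAt_discExp α β (one_sub_ne hz') (one_add_ne hz')).continuousAt.comp
        (continuous_circleMap 0 R).continuousAt
    · filter_upwards [hev] with R hR
      exact Filter.Eventually.of_forall fun θ _ => norm_discExp_le hα0 hβ0 (hnorm R hR θ)
    · simp
    · filter_upwards [ae_cos_ne_zero] with θ hθ _
      obtain ⟨h, h1, h2⟩ := discExp_boundary α β θ hθ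
      have e : Complex.exp (Complex.I * k * ((a / cos θ : ℝ) : ℂ)) *
          Complex.exp (Complex.I * ((M * a : ℝ) : ℂ) * ((tan θ : ℝ) : ℂ)) =
          discExp α β (circleMap 0 1 θ) := by
        simp only [circleMap, Complex.ofReal_one, one_mul, zero_add]
        rw [h, ← Complex.exp_add, ← Complex.exp_add, hα, hβ]
        congr 1
        push_cast
        ring
      rw [e]
      have hc : ContinuousAt (discExp α β) (circleMap 0 1 θ) := by
        apply (differentiableAt_discExp α β _ _).continuousAt <;> simpa [circleMap]
      have hcm : ContinuousAt (fun R : ℝ => circleMap 0 R θ) 1 := by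
        unfold circleMap; fun_prop
      exact (ContinuousAt.comp (f := fun R : ℝ => circleMap 0 R θ) hc hcm).tendsto.mono_left
        nhdsWithin_le_nhds
  refine tendsto_nhds_unique hlim (tendsto_const_nhds.congr' ?_)
  filter_upwards [hev] with R hR
  exact (hmean R hR).symm

/-! ### Overlap of windows around separated points -/

/-- Telescoping in `m` for a sequence that increases by `D` over each block of `r` steps: both sides
count `D` once per unit of shift. -/
lemma telescope_shift (H : ℕ → ℝ) (D : ℝ) (r : ℕ) (hH : ∀ n, H (n + r) = H n + D) (m : ℕ) :
    ∑ n ∈ Finset.range r, (H (n + m) - H n) = m * D := by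
  induction m with
  | zero => simp
  | succ m ih =>
    have h1 : ∑ n ∈ Finset.range r, (H (n + (m + 1)) - H n) =
        ∑ n ∈ Finset.range r, (H (n + 1 + m) - H (n + m)) +
        ∑ n ∈ Finset.range r, (H (n + m) - H n) := by
      rw [← Finset.sum_add_distrib]
      refine Finset.sum_congr rfl fun n _ => ?_
      rw [show n + (m + 1) = n + 1 + m by ring]; ring
    rw [h1, ih, Finset.sum_range_sub (fun n => H (n + m)), zero_add, add_comm r m, hH]
    push_cast; ring

/-- Windows of half-width `B` around the `2π`-periodic extension of the points cover each point of
the line at most `⌊2B/δ⌋ + 1` times. -/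
lemma sum_window_le_s4 (g : ℝ → ℝ) (hg : Continuous g) (hg0 : ∀ t, 0 ≤ g t)
    (hper : Function.Periodic g (2 * π)) (r : ℕ) (hr : 1 < r) (x : Fin r → ℝ)
    (δ : ℝ) (hδ : 0 < δ)
    (hsep : ∀ (j : ℕ) (h : j + 1 < r) (h' : j < r), δ ≤ x ⟨j + 1, h⟩ - x ⟨j, h'⟩)
    (hwrap : ∀ (h : r - 1 < r) (h' : 0 < r), δ ≤ 2 * π - (x ⟨r - 1, h⟩ - x ⟨0, h'⟩))
    (B : ℝ) (hB : 0 ≤ B) :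
    ∑ j, ∫ t in (x j - B)..(x j + B), g t ≤ (1 + 2 * B / δ) * ∫ t in (-π)..π, g t := by
  have hr0 : 0 < r := by omega
  set D := ∫ t in (-π)..π, g t with hD
  have hD0 : 0 ≤ D := intervalIntegral.integral_nonneg (by linarith [pi_pos]) fun t _ => hg0 t
  have hint : ∀ a b, IntervalIntegrable g volume a b := fun a b => hg.intervalIntegrable a b
  -- The points continued `2π`-periodically to the right; consecutive ones still differ by at least `δ`.
  set X : ℕ → ℝ := fun n => x ⟨n % r, Nat.mod_lt n hr0⟩ + 2 * π * (n / r : ℕ) with hX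
  have hXr : ∀ n, X (n + r) = X n + 2 * π := by
    intro n
    simp only [hX, Nat.add_mod_right, Nat.add_div_right n hr0]
    push_cast; ring
  have hX1 : ∀ n, δ ≤ X (n + 1) - X n := by
    intro n
    by_cases h : n % r + 1 < r
    · have e1 : (n + 1) % r = n % r + 1 := by
        rw [Nat.add_mod, Nat.mod_eq_of_lt (show 1 < r from hr), Nat.mod_eq_of_lt h]
      have e2 : (n + 1) / r = n / r := by
        rw [Nat.add_div hr0, Nat.mod_eq_of_lt hr, if_neg (by omega), Nat.div_eq_of_lt hr]; simp
      have := hsep (n % r) h (Nat.mod_lt n hr0)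
      simp only [hX, e1, e2]
      linarith
    · have hlt := Nat.mod_lt n hr0
      have e0 : n % r = r - 1 := by omega
      have e1 : (n + 1) % r = 0 := by
        rw [Nat.add_mod, Nat.mod_eq_of_lt (show 1 < r from hr), e0, Nat.sub_add_cancel hr.le,
          Nat.mod_self]
      have e2 : (n + 1) / r = n / r + 1 := by
        rw [Nat.add_div hr0, Nat.mod_eq_of_lt hr, if_pos (by omega), Nat.div_eq_of_lt hr]
      have := hwrap (Nat.sub_lt hr0 one_pos) hr0
      simp only [hX, e1, e2, e0]
      push_cast
      linarith
  have hXm : ∀ n m : ℕ, m * δ ≤ X (n + m) - X n := by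
    intro n m
    induction m with
    | zero => simp
    | succ m ih =>
      have := hX1 (n + m)
      rw [← add_assoc]; push_cast; linarith
  -- The right end of the `n`-th window lies to the left of the left end of the `(n + m)`-th one.
  set m := ⌊2 * B / δ⌋₊ + 1 with hm
  have hm1 : 2 * B ≤ m * δ := by
    have := Nat.lt_floor_add_one (2 * B / δ)
    rw [div_lt_iff₀ hδ] at this
    rw [hm]; push_cast; exact this.le
  have hm2 : (m : ℝ) ≤ 1 + 2 * B / δ := by
    have := Nat.floor_le (show 0 ≤ 2 * B / δ by positivity)
    rw [hm]; push_cast; linarith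
  -- The primitive of `g` at the left ends of the windows.
  set H : ℕ → ℝ := fun n => ∫ t in (0:ℝ)..(X n - B), g t with hH
  have hHr : ∀ n, H (n + r) = H n + D := by
    intro n
    have h1 : X (n + r) - B = (X n - B) + 2 * π := by rw [hXr]; ring
    have h2 := hper.intervalIntegral_add_eq 0 (-π)
    rw [show -π + 2 * π = π by ring] at h2
    simp only [hH]
    rw [h1, hper.intervalIntegral_add_eq_add 0 (X n - B) hint, h2]
  have hsum : ∑ j, ∫ t in (x j - B)..(x j + B), g t =
      ∑ n ∈ Finset.range r, ∫ t in (X n - B)..(X n + B), g t := by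
    rw [← Fin.sum_univ_eq_sum_range]
    refine Finset.sum_congr rfl fun j _ => ?_
    have : X j = x j := by
      simp only [hX, Nat.mod_eq_of_lt j.2, Nat.div_eq_of_lt j.2]; simp
    rw [this]
  rw [hsum]
  calc ∑ n ∈ Finset.range r, ∫ t in (X n - B)..(X n + B), g t
      ≤ ∑ n ∈ Finset.range r, (H (n + m) - H n) := by
        refine Finset.sum_le_sum fun n _ => ?_
        have h1 := hXm n m
        simp only [hH]
        rw [intervalIntegral.integral_interval_sub_left (hint _ _) (hint _ _)]
        exact intervalIntegral.integral_mono_interval le_rfl (by linarith) (by linarith)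
          (Filter.Eventually.of_forall hg0) (hint _ _)
    _ = m * D := telescope_shift H D r hHr m
    _ ≤ _ := mul_le_mul_of_nonneg_right hm2 hD0

instance isFiniteMeasure_restrict_uIoc (u v : ℝ) :
    IsFiniteMeasure (volume.restrict (uIoc u v)) := by
  unfold uIoc; infer_instance

/-! ### Mean value inequalities for trigonometric polynomials -/

lemma norm_trigPoly_le (N : ℕ) (c : ℤ → ℂ) (s : ℝ → ℂ)
    (hs : ∀ y : ℝ, s y = ∑ k ∈ Finset.Icc (-(N : ℤ)) (N : ℤ),
      c k * Complex.exp (Complex.I * (k : ℂ) * (y : ℂ))) (y : ℝ) :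
    ‖s y‖ ≤ ∑ k ∈ Finset.Icc (-(N : ℤ)) (N : ℤ), ‖c k‖ := by
  rw [hs]
  refine (norm_sum_le _ _).trans (Finset.sum_le_sum fun k _ => ?_)
  rw [norm_mul, Complex.norm_exp]
  simp

lemma continuous_trigPoly (N : ℕ) (c : ℤ → ℂ) (s : ℝ → ℂ)
    (hs : ∀ y : ℝ, s y = ∑ k ∈ Finset.Icc (-(N : ℤ)) (N : ℤ),
      c k * Complex.exp (Complex.I * (k : ℂ) * (y : ℂ))) : Continuous s := by
  rw [funext hs]
  fun_prop

lemma periodic_trigPoly (N : ℕ) (c : ℤ → ℂ) (s : ℝ → ℂ)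
    (hs : ∀ y : ℝ, s y = ∑ k ∈ Finset.Icc (-(N : ℤ)) (N : ℤ),
      c k * Complex.exp (Complex.I * (k : ℂ) * (y : ℂ))) : Function.Periodic s (2 * π) := by
  intro y
  rw [hs, hs]
  refine Finset.sum_congr rfl fun k _ => ?_
  congr 1
  rw [Complex.exp_eq_exp_iff_exists_int]
  exact ⟨k, by push_cast; ring⟩

/-- The weighted mean value inequality for `‖s‖`: integrating `s (x + a sec θ) e^{i N a tan θ}` over
`θ` reproduces `2π e^{-Na} s x`, because it does so for each exponential of frequency at most `N`. -/
lemma norm_mean_value (N : ℕ) (c : ℤ → ℂ) (s : ℝ → ℂ)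
    (hs : ∀ y : ℝ, s y = ∑ k ∈ Finset.Icc (-(N : ℤ)) (N : ℤ),
      c k * Complex.exp (Complex.I * (k : ℂ) * (y : ℂ))) (x a : ℝ) (ha : 0 ≤ a) :
    2 * π * (exp (-(N * a)) * ‖s x‖) ≤ ∫ θ in (0:ℝ)..(2 * π), ‖s (x + a / cos θ)‖ := by
  have hpi := pi_pos
  have hid : ∫ θ in (0:ℝ)..(2 * π), s (x + a / cos θ) *
      Complex.exp (Complex.I * (((N : ℝ) * a : ℝ) : ℂ) * ((tan θ : ℝ) : ℂ)) =
      2 * π * Complex.exp (-((N : ℝ) * a : ℝ)) * s x := by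
    have h1 : ∀ θ : ℝ, s (x + a / cos θ) *
        Complex.exp (Complex.I * (((N : ℝ) * a : ℝ) : ℂ) * ((tan θ : ℝ) : ℂ)) =
        ∑ k ∈ Finset.Icc (-(N : ℤ)) (N : ℤ), c k * Complex.exp (Complex.I * (k : ℂ) * (x : ℂ)) *
          (Complex.exp (Complex.I * ((k : ℝ) : ℂ) * ((a / cos θ : ℝ) : ℂ)) *
          Complex.exp (Complex.I * (((N : ℝ) * a : ℝ) : ℂ) * ((tan θ : ℝ) : ℂ))) := by
      intro θ
      rw [hs, Finset.sum_mul]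
      refine Finset.sum_congr rfl fun k _ => ?_
      rw [Complex.ofReal_add, mul_add, Complex.exp_add]
      push_cast
      ring
    simp_rw [h1]
    rw [intervalIntegral.integral_finsetSum]
    · rw [hs, Finset.mul_sum]
      refine Finset.sum_congr rfl fun k hk => ?_
      rw [intervalIntegral.integral_const_mul, integral_exp_sec_tan a k N ha]
      · ring
      · rw [Finset.mem_Icc] at hk
        rw [abs_le]
        exact_mod_cast hk
    · intro k _
      rw [intervalIntegrable_iff]
      refine Integrable.const_mul (Integrable.of_bound ?_ 1 ?_) _
      · apply Measurable.aestronglyMeasurable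
        simp_rw [tan_eq_sin_div_cos]
        fun_prop
      · refine Filter.Eventually.of_forall fun θ => ?_
        rw [norm_mul, Complex.norm_exp, Complex.norm_exp]
        simp [-Complex.ofReal_div]
  have h2 := intervalIntegral.norm_integral_le_integral_norm (μ := volume)
    (f := fun θ : ℝ => s (x + a / cos θ) *
      Complex.exp (Complex.I * (((N : ℝ) * a : ℝ) : ℂ) * ((tan θ : ℝ) : ℂ)))
    (show (0:ℝ) ≤ 2 * π by positivity)
  rw [hid] at h2
  have h3 : ‖(2 * π * Complex.exp (-((N : ℝ) * a : ℝ)) * s x : ℂ)‖ =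
      2 * π * (exp (-(N * a)) * ‖s x‖) := by
    rw [norm_mul, norm_mul, norm_mul, Complex.norm_exp]
    simp [abs_of_pos hpi]
    ring
  rw [h3] at h2
  refine h2.trans_eq (intervalIntegral.integral_congr fun θ _ => ?_)
  simp only [norm_mul]
  rw [Complex.norm_exp (Complex.I * (((N : ℝ) * a : ℝ) : ℂ) * ((tan θ : ℝ) : ℂ))]
  simp

/-- The `p`-th power version of `norm_mean_value`, by Jensen's inequality. -/
lemma rpow_mean_value (N : ℕ) (p : ℝ) (hp : 1 ≤ p) (c : ℤ → ℂ) (s : ℝ → ℂ)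
    (hs : ∀ y : ℝ, s y = ∑ k ∈ Finset.Icc (-(N : ℤ)) (N : ℤ),
      c k * Complex.exp (Complex.I * (k : ℂ) * (y : ℂ))) (x a : ℝ) (ha : 0 ≤ a) :
    2 * π * (exp (-(p * N * a)) * ‖s x‖ ^ p) ≤
      ∫ θ in (0:ℝ)..(2 * π), ‖s (x + a / cos θ)‖ ^ p := by
  have hpi := pi_pos
  have h2pi : (0:ℝ) ≤ 2 * π := by positivity
  have hp0 : 0 ≤ p := by linarith
  have hsc := continuous_trigPoly N c s hs
  set M := ∑ k ∈ Finset.Icc (-(N : ℤ)) (N : ℤ), ‖c k‖ with hM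
  have hsM := norm_trigPoly_le N c s hs
  have h1 := norm_mean_value N c s hs x a ha
  have hne : NeZero (volume.restrict (Ioc (0:ℝ) (2 * π))) := by
    refine ⟨fun h => ?_⟩
    rw [Measure.restrict_eq_zero, Real.volume_Ioc, ENNReal.ofReal_eq_zero] at h
    linarith
  have hcr : Continuous fun y : ℝ => y ^ p := Real.continuous_rpow_const hp0
  have hJ := ConvexOn.map_average_le (μ := volume.restrict (Ioc (0:ℝ) (2 * π)))
    (f := fun θ : ℝ => ‖s (x + a / cos θ)‖) (convexOn_rpow hp)
    hcr.continuousOn isClosed_Ici (Filter.Eventually.of_forall fun θ => norm_nonneg _)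
    (by
      refine Integrable.of_bound (Measurable.aestronglyMeasurable ?_) M
        (Filter.Eventually.of_forall fun θ => ?_)
      · have := hsc.measurable
        fun_prop
      · simpa using hsM _)
    (by
      refine Integrable.of_bound (Measurable.aestronglyMeasurable ?_) (M ^ p)
        (Filter.Eventually.of_forall fun θ => ?_)
      · have := hsc.measurable
        have := hcr.measurable
        fun_prop
      · simp only [Function.comp]
        rw [Real.norm_of_nonneg (by positivity)]
        exact Real.rpow_le_rpow (norm_nonneg _) (hsM _) hp0)
  rw [setAverage_eq, setAverage_eq, Real.volume_real_Ioc_of_le h2pi,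
    ← intervalIntegral.integral_of_le h2pi, ← intervalIntegral.integral_of_le h2pi, sub_zero,
    smul_eq_mul, smul_eq_mul, ← div_eq_inv_mul, ← div_eq_inv_mul,
    le_div_iff₀ (by positivity)] at hJ
  have h3 : exp (-(p * N * a)) * ‖s x‖ ^ p = (exp (-(N * a)) * ‖s x‖) ^ p := by
    rw [Real.mul_rpow (exp_pos _).le (norm_nonneg _), ← Real.exp_mul]
    congr 2; ring
  rw [h3, mul_comm]
  refine le_trans (mul_le_mul_of_nonneg_right (Real.rpow_le_rpow (by positivity) ?_ hp0) h2pi) hJ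
  rw [le_div_iff₀ (by positivity)]
  linarith

/-- Since `sec (θ + π) = - sec θ`, the mean over the circle is a mean over the half circle where the
cosine is nonnegative, of symmetric pairs of values. At `cos θ = 0` the quotient is the junk value
`0`, which respects this symmetry and the period. -/
lemma fold_integral (g : ℝ → ℝ) (hg : Continuous g) (K : ℝ) (hK : ∀ t, ‖g t‖ ≤ K) (x a : ℝ) :
    ∫ θ in (0:ℝ)..(2 * π), g (x + a / cos θ) =
      ∫ θ in (-(π / 2))..(π / 2), (g (x + a / cos θ) + g (x - a / cos θ)) := by
  have hm := hg.measurable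
  have hi : ∀ u v, IntervalIntegrable (fun θ : ℝ => g (x + a / cos θ)) volume u v := by
    intro u v
    rw [intervalIntegrable_iff]
    exact Integrable.of_bound (Measurable.aestronglyMeasurable (by fun_prop)) K
      (Filter.Eventually.of_forall fun θ => hK _)
  have hi' : ∀ u v, IntervalIntegrable (fun θ : ℝ => g (x - a / cos θ)) volume u v := by
    intro u v
    rw [intervalIntegrable_iff]
    exact Integrable.of_bound (Measurable.aestronglyMeasurable (by fun_prop)) K
      (Filter.Eventually.of_forall fun θ => hK _)
  have hper : Function.Periodic (fun θ : ℝ => g (x + a / cos θ)) (2 * π) := by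
    intro θ; simp only [cos_add_two_pi]
  have h1 := hper.intervalIntegral_add_eq 0 (-(π / 2))
  rw [zero_add] at h1
  rw [h1, ← intervalIntegral.integral_add_adjacent_intervals (hi _ (π / 2)) (hi _ _),
    intervalIntegral.integral_add (hi _ _) (hi' _ _)]
  congr 1
  have h2 := intervalIntegral.integral_comp_add_right (a := -(π / 2)) (b := π / 2)
    (fun θ : ℝ => g (x + a / cos θ)) π
  simp only [cos_add_pi, div_neg, ← sub_eq_add_neg] at h2
  rw [h2]
  congr 1 <;> ring

/-- Integrating the symmetric pairs over the scale `a` gives a single symmetric window. -/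
lemma radial_integral (g : ℝ → ℝ) (hg : Continuous g) (x A κ : ℝ) (hκ : κ ≠ 0) :
    ∫ a in (0:ℝ)..A, (g (x + a / κ) + g (x - a / κ)) =
      κ * ∫ t in (x - A / κ)..(x + A / κ), g t := by
  rw [intervalIntegral.integral_add
    (Continuous.intervalIntegrable (by fun_prop) _ _) (Continuous.intervalIntegrable (by fun_prop) _ _),
    intervalIntegral.integral_comp_add_div g hκ, intervalIntegral.integral_comp_sub_div g hκ,
    ← smul_add, add_comm, zero_div, sub_zero, add_zero, intervalIntegral.integral_add_adjacent_intervals]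
  · simp
  all_goals exact hg.intervalIntegrable _ _

/-! ### The large sieve inequality -/

/-- The sieve bound with a free truncation parameter `A` for the scale of the mean value
inequality. -/
lemma sieve_inequality (N : ℕ) (hN : 0 < N) (p : ℝ) (hp : 1 ≤ p)
    (r : ℕ) (hr : 1 < r) (x : Fin r → ℝ) (δ : ℝ) (hδ : 0 < δ)
    (hsep : ∀ (j : ℕ) (h : j + 1 < r) (h' : j < r), δ ≤ x ⟨j + 1, h⟩ - x ⟨j, h'⟩)
    (hwrap : ∀ (h : r - 1 < r) (h' : 0 < r), δ ≤ 2 * π - (x ⟨r - 1, h⟩ - x ⟨0, h'⟩))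
    (c : ℤ → ℂ) (s : ℝ → ℂ)
    (hs : ∀ y : ℝ, s y = ∑ k ∈ Finset.Icc (-(N : ℤ)) (N : ℤ),
      c k * Complex.exp (Complex.I * (k : ℂ) * (y : ℂ))) (A : ℝ) (hA : 0 ≤ A) :
    2 * π * ((1 - exp (-(p * N * A))) / (p * N)) * ∑ j, ‖s (x j)‖ ^ p ≤
      (2 + 2 * π * A / δ) * ∫ t in (-π)..π, ‖s t‖ ^ p := by
  have hpi := pi_pos
  have hp0 : 0 < p := by linarith
  have hL : 0 < p * N := by positivity
  set M := ∑ k ∈ Finset.Icc (-(N : ℤ)) (N : ℤ), ‖c k‖ with hM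
  have hsM := norm_trigPoly_le N c s hs
  set g : ℝ → ℝ := fun t => ‖s t‖ ^ p with hgdef
  have hg : Continuous g :=
    (Real.continuous_rpow_const hp0.le).comp (continuous_trigPoly N c s hs).norm
  have hg0 : ∀ t, 0 ≤ g t := fun t => by positivity
  have hgK : ∀ t, ‖g t‖ ≤ M ^ p := fun t => by
    rw [Real.norm_of_nonneg (hg0 t)]
    exact Real.rpow_le_rpow (norm_nonneg _) (hsM _) hp0.le
  have hper : Function.Periodic g (2 * π) := fun t => by
    simp only [hgdef, periodic_trigPoly N c s hs t]
  have hm := hg.measurable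
  set D := ∫ t in (-π)..π, g t with hD
  set Φ : ℝ → ℝ → ℝ := fun a θ => ∑ j, (g (x j + a / cos θ) + g (x j - a / cos θ)) with hΦ
  have hΦK : ∀ a θ, ‖Φ a θ‖ ≤ ∑ j : Fin r, (M ^ p + M ^ p) := fun a θ =>
    (norm_sum_le _ _).trans (Finset.sum_le_sum fun j _ =>
      (norm_add_le _ _).trans (add_le_add (hgK _) (hgK _)))
  have hΦm : Measurable (Function.uncurry Φ) := by
    simp only [hΦ, Function.uncurry_def]
    fun_prop
  set ν := volume.restrict (Ioc (-(π / 2)) (π / 2)) with hν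
  have hle : -(π / 2) ≤ π / 2 := by linarith
  have hprod : Integrable (Function.uncurry Φ) ((volume.restrict (uIoc 0 A)).prod ν) :=
    Integrable.of_bound hΦm.aestronglyMeasurable _ (Filter.Eventually.of_forall fun z => hΦK _ _)
  -- The mean value inequality at scale `a`, summed over the points.
  have hpt : ∀ a ∈ Icc (0:ℝ) A, 2 * π * (exp (-(p * N) * a) * ∑ j, g (x j)) ≤ ∫ θ, Φ a θ ∂ν := by
    intro a ha
    have h1 : ∫ θ, Φ a θ ∂ν = ∑ j, ∫ θ in (0:ℝ)..(2 * π), g (x j + a / cos θ) := by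
      simp only [hΦ]
      rw [integral_finsetSum]
      · refine Finset.sum_congr rfl fun j _ => ?_
        rw [fold_integral g hg _ hgK, intervalIntegral.integral_of_le hle]
      · intro j _
        exact Integrable.of_bound (Measurable.aestronglyMeasurable (by fun_prop)) (M ^ p + M ^ p)
          (Filter.Eventually.of_forall fun θ => (norm_add_le _ _).trans (add_le_add (hgK _) (hgK _)))
    rw [h1, Finset.mul_sum, Finset.mul_sum]
    refine Finset.sum_le_sum fun j _ => ?_
    have := rpow_mean_value N p hp c s hs (x j) a ha.1
    rwa [neg_mul]
  have hlow : 2 * π * ((1 - exp (-(p * N * A))) / (p * N)) * ∑ j, g (x j) ≤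
      ∫ a in (0:ℝ)..A, ∫ θ, Φ a θ ∂ν := by
    have h1 : ∫ a in (0:ℝ)..A, 2 * π * (exp (-(p * N) * a) * ∑ j, g (x j)) =
        2 * π * ((1 - exp (-(p * N * A))) / (p * N)) * ∑ j, g (x j) := by
      rw [intervalIntegral.integral_const_mul, intervalIntegral.integral_mul_const,
        intervalIntegral.integral_comp_mul_left (fun a => exp a) (neg_ne_zero.2 hL.ne'),
        integral_exp]
      simp only [mul_zero, exp_zero, smul_eq_mul, neg_mul]
      field_simp
      ring
    rw [← h1]
    refine intervalIntegral.integral_mono_on hA (Continuous.intervalIntegrable (by fun_prop) _ _)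
      ?_ hpt
    rw [intervalIntegrable_iff]
    exact hprod.integral_prod_left
  -- For fixed `θ`, integrating in `a` produces windows of half-width `A / cos θ`, and the factor
  -- `cos θ` cancels the loss in the number of overlaps.
  have hup : ∫ θ, (∫ a in (0:ℝ)..A, Φ a θ) ∂ν ≤
      ∫ θ in (-(π / 2))..(π / 2), (cos θ + 2 * A / δ) * D := by
    rw [intervalIntegral.integral_of_le hle]
    refine integral_mono_ae ?_ ?_ ?_
    · have := hprod.integral_prod_right
      simpa only [intervalIntegral.integral_of_le hA, uIoc_of_le hA, Function.uncurry_apply_pair]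
        using this
    · exact (Continuous.integrableOn_Ioc (by fun_prop))
    · have hIoo : ∀ᵐ θ ∂ν, 0 < cos θ := by
        rw [hν, ae_restrict_iff' measurableSet_Ioc]
        filter_upwards [ae_cos_ne_zero] with θ h1 h2
        exact lt_of_le_of_ne (cos_nonneg_of_mem_Icc ⟨h2.1.le, h2.2⟩) h1.symm
      filter_upwards [hIoo] with θ hθ
      have h1 : ∫ a in (0:ℝ)..A, Φ a θ =
          cos θ * ∑ j, ∫ t in (x j - A / cos θ)..(x j + A / cos θ), g t := by
        simp only [hΦ]
        rw [intervalIntegral.integral_finsetSum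
          (fun j _ => Continuous.intervalIntegrable (by fun_prop) _ _), Finset.mul_sum]
        exact Finset.sum_congr rfl fun j _ => radial_integral g hg _ _ _ hθ.ne'
      rw [h1]
      have h2 := sum_window_le_s4 g hg hg0 hper r hr x δ hδ hsep hwrap (A / cos θ) (by positivity)
      refine (mul_le_mul_of_nonneg_left h2 hθ.le).trans_eq ?_
      rw [← hD]
      field_simp
  rw [← intervalIntegral_integral_swap hprod] at hup
  refine (hlow.trans hup).trans_eq ?_
  rw [intervalIntegral.integral_mul_const, intervalIntegral.integral_add
    (Continuous.intervalIntegrable (by fun_prop) _ _)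
    (Continuous.intervalIntegrable (by fun_prop) _ _), integral_cos,
    intervalIntegral.integral_const, sin_neg, sin_pi_div_two, smul_eq_mul]
  ring

theorem large_sieve_Lp_normalized_nonint
    (N : ℕ) (hN : 0 < N) (p : ℝ) (hp : 1 ≤ p)
    (r : ℕ) (hr : 1 < r) (x : Fin r → ℝ)
    (hmem : ∀ j, x j ∈ Ioc (-π) π) (hmono : StrictMono x)
    (δ : ℝ) (hδ : 0 < δ)
    (hsep : ∀ j : ℕ, ∀ h : j + 1 < r, δ ≤ x ⟨j + 1, h⟩ - x ⟨j, by omega⟩)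
    (hwrap : δ ≤ 2 * π - (x ⟨r - 1, by omega⟩ - x ⟨0, by omega⟩))
    (hint : ¬ ∃ z : ℤ, π / (N * δ) = (z : ℝ))
    (c : ℤ → ℂ) (s : ℝ → ℂ)
    (hs : ∀ y : ℝ, s y = ∑ k ∈ Finset.Icc (-(N : ℤ)) (N : ℤ),
      c k * Complex.exp (Complex.I * (k : ℂ) * (y : ℂ)))
    (hnorm : (∫ y in Ioc (-π) π, ‖s y‖ ^ p) ^ (1 / p) = 1) :
    ∑ j, ‖s (x j)‖ ^ p < (p + 1) * (N / π + 1 / δ) := by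
  have hpi := pi_pos
  have hp0 : 0 < p := by linarith
  have hN0 : (0:ℝ) < N := by exact_mod_cast hN
  have hD : ∫ t in (-π)..π, ‖s t‖ ^ p = 1 := by
    rw [intervalIntegral.integral_of_le (by linarith)]
    have h0 : 0 ≤ ∫ y in Ioc (-π) π, ‖s y‖ ^ p := integral_nonneg fun t => by positivity
    rw [← Real.rpow_inv_rpow h0 hp0.ne', ← one_div, hnorm, Real.one_rpow]
  -- With `A = log (p + 1) / (p N)` the factor `1 - e^{-pNA}` equals `p / (p + 1)`; strictness comes
  -- from `log (p + 1) < p`.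
  have hlog0 : 0 ≤ log (p + 1) := log_nonneg (by linarith)
  have hlog : log (p + 1) < p := by
    have := log_lt_sub_one_of_pos (show 0 < p + 1 by linarith) (by linarith)
    linarith
  have h := sieve_inequality N hN p hp r hr x δ hδ
    (fun j h _ => hsep j h) (fun _ _ => hwrap) c s hs
    (log (p + 1) / (p * N)) (by positivity)
  have he : exp (-(p * N * (log (p + 1) / (p * N)))) = 1 / (p + 1) := by
    rw [mul_div_cancel₀ _ (by positivity), exp_neg, exp_log (by linarith), one_div]
  rw [hD, he, mul_one] at h
  set S := ∑ j, ‖s (x j)‖ ^ p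
  have h1 : 2 * π * ((1 - 1 / (p + 1)) / (p * N)) * S = 2 * π / ((p + 1) * N) * S := by
    field_simp
    ring
  have h2 : S ≤ (p + 1) * (N / π + log (p + 1) / p / δ) := by
    rw [h1, div_mul_eq_mul_div, div_le_iff₀ (by positivity)] at h
    refine le_of_mul_le_mul_left (h.trans_eq ?_) (show 0 < 2 * π by positivity)
    field_simp
  refine h2.trans_lt ?_
  have h3 : log (p + 1) / p < 1 := by rwa [div_lt_one hp0]
  gcongr
end

section
/- Let N be a positive integer and let u : 𝕋 → ℝ be continuous, nonnegative, even, not identically zero, with support contained in [−π/(2N), π/(2N)]. Then there exist complex numbers τ_m, m = −N+1, …, N, such that (−1)^m τ_m > 0 (in particular each τ_m is real with sign (−1)^m) for all m, and the trigonometric sum p_u(x) = ∑_{m=−N+1}^{N} τ_m e^{−iπ m x/N} satisfies p_u(n) = 1/û(n) for every integer n with −N ≤ n ≤ N. -/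
/-!
The Fourier transform of `u` is real: `û(x) = ∫ cos (x t) u(t) dt`. On the support of `u` and for
`|n| ≤ N` one has `|n t| ≤ π / 2`, so `û(n) > 0`, and for `|n| < N`
`2 û(n) - û(n + 1) - û(n - 1) = ∫ 2 cos (n t) (1 - cos t) u(t) dt > 0`. By the inequality
`1 / a + 1 / b ≥ 4 / (a + b)`, the even positive sequence `f(n) = 1 / û(n)` is then strictly convex
on `[-N, N]` (`exists_coeff_of_convex` needs nothing else about `u`).

The coefficients are the discrete Fourier coefficients of `f` on `ℤ / 2N`. After the shift
`n = k - N` the factor `(-1) ^ m` appears, and `(-1) ^ m τ_m` is a positive multiple of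
`∑_{k < 2N} g(k) cos (θ k)` with `g(k) = f(k - N)`, `θ = π m / N`. For `m = 0` this sum is
positive term by term. For `m ≠ 0`, put `s(k) = 1 - cos (θ k)`, which vanishes at `0` and `2N` and
has second difference `(2 - 2 cos θ) cos (θ k)`. Two summations by parts (`sum_by_parts`) give
`(2 - 2 cos θ) ∑ g(k) cos (θ k) = ∑ s(k) Δ²g(k)`, where the second differences `Δ²g(k)` with
`0 < k < 2N` are positive by convexity (`cos_sum_pos`). The interpolation property is orthogonality
of characters (`sum_exp_eq`).
-/

open Real MeasureTheory Set

-- Fourier transform on 𝕋 = (-π, π]: û(x) = ∫_𝕋 e^{-ixt} u(t) dt.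
noncomputable def fourierT (u : ℝ → ℝ) (x : ℝ) : ℂ :=
  ∫ t in Set.Ioc (-π) π, Complex.exp (-(Complex.I) * (x : ℂ) * (t : ℂ)) * (u t : ℂ)

lemma sum_Icc_eq_sum_range {M : Type*} [AddCommMonoid M] (N : ℕ) (F : ℤ → M) :
    ∑ m ∈ Finset.Icc (-(N : ℤ) + 1) (N : ℤ), F m
      = ∑ j ∈ Finset.range (2 * N), F ((j : ℤ) + (-(N : ℤ) + 1)) := by
  refine Finset.sum_nbij' (fun m => (m + N - 1).toNat) (fun j => (j : ℤ) + (-(N : ℤ) + 1))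
    ?_ ?_ ?_ ?_ ?_
  · intro m hm; simp only [Finset.mem_Icc, Finset.mem_range] at *; omega
  · intro m hm; simp only [Finset.mem_Icc, Finset.mem_range] at *; omega
  · intro m hm; simp only [Finset.mem_Icc] at *; omega
  · intro m hm; simp only [Finset.mem_range] at *; omega
  · intro m hm
    simp only [Finset.mem_Icc] at hm
    congr 1; omega

/-- Orthogonality of the characters of `ℤ / 2N`. -/
lemma sum_exp_eq (N : ℕ) (hN : 0 < N) (d : ℤ) :
    ∑ m ∈ Finset.Icc (-(N : ℤ) + 1) (N : ℤ), Complex.exp (Complex.I * π * m * d / N)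
      = if (2 * N : ℤ) ∣ d then (2 * N : ℂ) else 0 := by
  have hNc : (N : ℂ) ≠ 0 := by exact_mod_cast hN.ne'
  have hpi : (π : ℂ) ≠ 0 := by exact_mod_cast Real.pi_ne_zero
  set ζ : ℂ := Complex.exp (Complex.I * π * d / N) with hζ
  have hterm (m : ℤ) : Complex.exp (Complex.I * π * m * d / N) = ζ ^ m := by
    rw [hζ, ← Complex.exp_int_mul]; congr 1; ring
  have hζ0 : ζ ≠ 0 := Complex.exp_ne_zero _
  have hone : ζ = 1 ↔ (2 * N : ℤ) ∣ d := by
    rw [hζ, Complex.exp_eq_one_iff]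
    constructor
    · rintro ⟨n, hn⟩
      refine ⟨n, ?_⟩
      have : (d : ℂ) = 2 * N * n := by
        have hI := Complex.I_ne_zero
        field_simp at hn
        linear_combination hn
      exact_mod_cast this
    · rintro ⟨n, rfl⟩
      refine ⟨n, ?_⟩
      push_cast
      field_simp
  have hpow : ζ ^ (2 * N) = 1 := by
    rw [hζ, ← Complex.exp_nat_mul, Complex.exp_eq_one_iff]
    refine ⟨d, ?_⟩
    push_cast
    field_simp
  simp_rw [hterm]
  rw [sum_Icc_eq_sum_range]
  split_ifs with h
  · simp [hone.2 h]
  · have h1 : ζ ≠ 1 := fun h' => h (hone.1 h')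
    simp_rw [zpow_add₀ hζ0, zpow_natCast]
    rw [← Finset.sum_mul, geom_sum_eq h1, hpow]
    simp

/-- Double summation by parts, with its boundary terms. -/
lemma sum_by_parts (g s : ℤ → ℝ) (M : ℕ) :
    ∑ k ∈ Finset.range M, s (k + 1) * (g (k + 2) - 2 * g (k + 1) + g k)
      = ∑ k ∈ Finset.range M, g k * (s (k + 1) - 2 * s k + s (k - 1))
        + (s M * g (M + 1) + s (M - 1) * g M - 2 * s M * g M)
        - (s 0 * g 1 + s (-1) * g 0 - 2 * s 0 * g 0) := by
  induction M with
  | zero => simp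
  | succ M ih =>
    rw [Finset.sum_range_succ, Finset.sum_range_succ, ih]
    push_cast
    rw [show (M : ℤ) + 1 + 1 = M + 2 by ring, show (M : ℤ) + 1 - 1 = M by ring]
    ring

/-- The cosine sums of a strictly convex sequence on `0, …, 2N` with equal end values are positive
at every nonzero frequency. -/
lemma cos_sum_pos (N : ℕ) (hN : 0 < N) (g : ℤ → ℝ) (hper : g (2 * N) = g 0)
    (hconv : ∀ k : ℤ, 0 < k → k < 2 * N → 0 < g (k + 1) - 2 * g k + g (k - 1))
    (m : ℤ) (hm : ¬ (2 * N : ℤ) ∣ m) :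
    0 < ∑ k ∈ Finset.range (2 * N), g k * Real.cos (π * m * k / N) := by
  have hNr : (N : ℝ) ≠ 0 := by exact_mod_cast hN.ne'
  set θ : ℝ := π * m / N with hθ
  set s : ℤ → ℝ := fun k => 1 - Real.cos (θ * k) with hs
  have hs_nonneg (k) : 0 ≤ s k := sub_nonneg.2 (Real.cos_le_one _)
  have hs0 : s 0 = 0 := by simp [hs]
  have hθN : θ * (2 * N) = m * (2 * π) := by rw [hθ]; field_simp
  have hsM : s (2 * N) = 0 := by
    simp only [hs]; push_cast; rw [hθN, Real.cos_int_mul_two_pi]; simp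
  have hsM1 : s (2 * N - 1) = s (-1) := by
    simp only [hs]; push_cast
    rw [show θ * (2 * N - 1) = θ * (-1) + m * (2 * π) by rw [← hθN]; ring,
      Real.cos_add_int_mul_two_pi]
  have hcos : Real.cos θ < 1 := by
    refine lt_of_le_of_ne (Real.cos_le_one _) fun h => hm ?_
    obtain ⟨n, hn⟩ := (Real.cos_eq_one_iff _).1 h
    refine ⟨n, ?_⟩
    have : (m : ℝ) = 2 * N * n := by
      rw [hθ] at hn
      have hpi := Real.pi_ne_zero
      field_simp at hn
      linear_combination -hn
    exact_mod_cast this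
  have hparts := sum_by_parts g s (2 * N)
  push_cast at hparts
  rw [hs0, hsM, hsM1, hper] at hparts
  have hright : ∑ k ∈ Finset.range (2 * N), g k * (s (k + 1) - 2 * s k + s (k - 1))
      = (2 - 2 * Real.cos θ) * ∑ k ∈ Finset.range (2 * N), g k * Real.cos (π * m * k / N) := by
    rw [Finset.mul_sum]
    refine Finset.sum_congr rfl fun k _ => ?_
    simp only [hs]; push_cast
    rw [mul_add θ, mul_sub θ, mul_one, Real.cos_add, Real.cos_sub,
      show π * m * k / N = θ * k by rw [hθ]; ring]
    ring
  have hleft : 0 < ∑ k ∈ Finset.range (2 * N), s (k + 1) * (g (k + 2) - 2 * g (k + 1) + g k) := by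
    have hd (k : ℕ) (hk : k + 1 < 2 * N) : 0 < g (k + 2) - 2 * g (k + 1) + g k := by
      have := hconv (k + 1) (by omega) (by omega)
      rwa [show (k : ℤ) + 1 + 1 = k + 2 by ring, show (k : ℤ) + 1 - 1 = k by ring] at this
    refine Finset.sum_pos' (fun k hk => ?_) ⟨0, by simp [hN], ?_⟩
    · rw [Finset.mem_range] at hk
      by_cases h : k + 1 < 2 * N
      · exact mul_nonneg (hs_nonneg _) (hd k h).le
      · rw [show (k : ℤ) + 1 = 2 * N by omega, hsM, zero_mul]
    · refine mul_pos ?_ (hd 0 (by omega))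
      simp only [hs]; push_cast; simpa using hcos
  rw [hparts, hright] at hleft
  have h2 : 0 < 2 - 2 * Real.cos θ := by linarith
  refine pos_of_mul_pos_right (a := 2 - 2 * Real.cos θ) ?_ h2.le
  linarith

/-- The window `-N, …, N - 1` contains exactly one representative of `n` modulo `2N`, and `f` takes
the value `f n` there: for `n = N` the representative is `-N` and `f` is even. -/
lemma sum_ite_dvd (N : ℕ) (hN : 0 < N) (f : ℤ → ℝ) (heven : ∀ n, f (-n) = f n) (n : ℤ)
    (h1 : -(N : ℤ) ≤ n) (h2 : n ≤ N) :
    ∑ k ∈ Finset.range (2 * N),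
      (f (k - N) : ℂ) * (if (2 * N : ℤ) ∣ k - N - n then (2 * N : ℂ) else 0)
      = f n * (2 * N) := by
  have key (k₀ : ℕ) (hk : k₀ < 2 * N) (hd : (2 * N : ℤ) ∣ k₀ - N - n) (hf : f (k₀ - N) = f n) :
      ∑ k ∈ Finset.range (2 * N),
      (f (k - N) : ℂ) * (if (2 * N : ℤ) ∣ k - N - n then (2 * N : ℂ) else 0)
      = f n * (2 * N) := by
    rw [Finset.sum_eq_single_of_mem k₀ (by simpa using hk), if_pos hd, hf]
    intro k hk' hne
    rw [Finset.mem_range] at hk'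
    rw [if_neg, mul_zero]
    intro h
    have hsub : (2 * N : ℤ) ∣ (k : ℤ) - k₀ := by
      have := dvd_sub h hd
      rwa [show (k : ℤ) - N - n - (k₀ - N - n) = k - k₀ by ring] at this
    have := Int.eq_zero_of_abs_lt_dvd hsub (by rw [abs_lt]; omega)
    omega
  rcases h2.lt_or_eq with h | h
  · have hc : (((n + N).toNat : ℕ) : ℤ) = n + N := by omega
    refine key (n + N).toNat (by omega) ?_ ?_ <;> rw [hc]
    · simp
    · simp
  · -- the residue class of `N` modulo `2N` is represented by `-N`
    refine key 0 (by omega) ⟨-1, by push_cast; omega⟩ ?_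
    rw [h, ← heven N]; simp

/-- The dual polynomial for an arbitrary even positive sequence that is strictly convex
on `[-N, N]`. -/
lemma exists_coeff_of_convex (N : ℕ) (hN : 0 < N) (f : ℤ → ℝ) (heven : ∀ n, f (-n) = f n)
    (hpos : ∀ n : ℤ, -(N : ℤ) ≤ n → n ≤ N → 0 < f n)
    (hconv : ∀ n : ℤ, -(N : ℤ) < n → n < N → 0 < f (n + 1) - 2 * f n + f (n - 1)) :
    ∃ τ : ℤ → ℝ,
      (∀ m ∈ Finset.Icc (-(N : ℤ) + 1) (N : ℤ), 0 < (-1 : ℝ) ^ m * τ m) ∧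
      (∀ n : ℤ, -(N : ℤ) ≤ n → n ≤ (N : ℤ) →
        ∑ m ∈ Finset.Icc (-(N : ℤ) + 1) (N : ℤ),
          (τ m : ℂ) * Complex.exp (-(Complex.I) * π * (m : ℂ) * (n : ℂ) / (N : ℂ))
          = (f n : ℂ)) := by
  have hNr : (0 : ℝ) < N := by exact_mod_cast hN
  have hNc : (N : ℂ) ≠ 0 := by exact_mod_cast hN.ne'
  refine ⟨fun m => (-1 : ℝ) ^ m * ((2 * N : ℝ)⁻¹ *
    ∑ k ∈ Finset.range (2 * N), f (k - N) * Real.cos (π * m * k / N)), ?_, ?_⟩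
  · intro m hm
    rw [Finset.mem_Icc] at hm
    rw [← mul_assoc, ← mul_zpow]
    simp only [mul_neg, mul_one, neg_neg, one_zpow, one_mul]
    refine mul_pos (by positivity) ?_
    by_cases h0 : m = 0
    · subst h0
      refine Finset.sum_pos (fun k hk => ?_) ⟨0, by simp [hN]⟩
      rw [Finset.mem_range] at hk
      simpa using hpos (k - N) (by omega) (by omega)
    · refine cos_sum_pos N hN (fun k => f (k - N)) ?_ ?_ m ?_
      · simp only [zero_sub, heven]; congr 1; ring
      · intro k hk1 hk2
        have := hconv (k - N) (by omega) (by omega)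
        rwa [show k - (N : ℤ) + 1 = k + 1 - N by ring, show k - (N : ℤ) - 1 = k - 1 - N by ring]
          at this
      · intro h
        exact h0 (Int.eq_zero_of_abs_lt_dvd h (by rw [abs_lt]; omega))
  · intro n hn1 hn2
    have hsign (m : ℤ) : ((-1 : ℂ)) ^ m = Complex.exp (-(π * Complex.I * m)) := by
      rw [← Complex.exp_pi_mul_I, ← Complex.exp_int_mul]
      rw [Complex.exp_eq_exp_iff_exists_int]
      exact ⟨m, by ring⟩
    have hsign' (m : ℤ) : ((-1 : ℂ)) ^ m = Complex.exp (π * Complex.I * m) := by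
      rw [← Complex.exp_pi_mul_I, ← Complex.exp_int_mul]
      congr 1; ring
    have hterm (m : ℤ) (k : ℕ) :
        (-1 : ℂ) ^ m * Complex.cos (π * m * k / N) *
          Complex.exp (-(Complex.I) * π * (m : ℂ) * (n : ℂ) / (N : ℂ))
        = (Complex.exp (Complex.I * π * m * ((k - N - n : ℤ) : ℂ) / N)
          + Complex.exp (Complex.I * π * m * ((-(k - N - (-n)) : ℤ) : ℂ) / N)) / 2 := by
      have e1 : Complex.exp (Complex.I * π * m * ((k - N - n : ℤ) : ℂ) / N)
          = (-1 : ℂ) ^ m * Complex.exp (π * m * k / N * Complex.I)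
            * Complex.exp (-(Complex.I) * π * (m : ℂ) * (n : ℂ) / (N : ℂ)) := by
        rw [hsign, ← Complex.exp_add, ← Complex.exp_add]
        congr 1; push_cast; field_simp; ring
      have e2 : Complex.exp (Complex.I * π * m * ((-(k - N - (-n)) : ℤ) : ℂ) / N)
          = (-1 : ℂ) ^ m * Complex.exp (-(π * m * k / N) * Complex.I)
            * Complex.exp (-(Complex.I) * π * (m : ℂ) * (n : ℂ) / (N : ℂ)) := by
        rw [hsign', ← Complex.exp_add, ← Complex.exp_add]
        congr 1; push_cast; field_simp; ring
      rw [e1, e2, Complex.cos]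
      ring
    have hexpand (m : ℤ) : (((-1 : ℝ) ^ m * ((2 * N : ℝ)⁻¹ *
          ∑ k ∈ Finset.range (2 * N), f (k - N) * Real.cos (π * m * k / N)) : ℝ) : ℂ) *
          Complex.exp (-(Complex.I) * π * (m : ℂ) * (n : ℂ) / (N : ℂ))
        = ∑ k ∈ Finset.range (2 * N), (2 * N : ℂ)⁻¹ * f (k - N) *
          ((Complex.exp (Complex.I * π * m * ((k - N - n : ℤ) : ℂ) / N)
          + Complex.exp (Complex.I * π * m * ((-(k - N - (-n)) : ℤ) : ℂ) / N)) / 2) := by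
      simp_rw [← hterm]
      push_cast
      rw [Finset.mul_sum, Finset.mul_sum, Finset.sum_mul]
      refine Finset.sum_congr rfl fun k _ => ?_
      ring
    simp_rw [hexpand]
    rw [Finset.sum_comm]
    simp_rw [← Finset.mul_sum, ← Finset.sum_div, Finset.sum_add_distrib, sum_exp_eq N hN, dvd_neg]
    have s1 := sum_ite_dvd N hN f heven n hn1 hn2
    have s2 := sum_ite_dvd N hN f heven (-n) (by omega) (by omega)
    rw [heven] at s2
    calc _ = (2 * N : ℂ)⁻¹ / 2 * (∑ k ∈ Finset.range (2 * N),
      (f (k - N) : ℂ) * (if (2 * N : ℤ) ∣ k - N - n then (2 * N : ℂ) else 0) +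
        ∑ k ∈ Finset.range (2 * N),
      (f (k - N) : ℂ) * (if (2 * N : ℤ) ∣ k - N - (-n) then (2 * N : ℂ) else 0)) := by
          rw [← Finset.sum_add_distrib, Finset.mul_sum]
          refine Finset.sum_congr rfl fun k _ => ?_
          ring
      _ = _ := by
          rw [s1, s2]; field_simp; ring

/-- A bump `u` supported in `[-L, L]` has positive integral against a weight that is positive
on `(-L, L)` away from `0`. The weight may vanish at `0`, as `cos (n t) (1 - cos t)` does. -/
lemma integral_weight_pos (u φ : ℝ → ℝ) (L : ℝ) (hL : L < π)
    (hu_cont : Continuous u) (hu_nonneg : ∀ t, 0 ≤ u t) (hu_ne : u ≠ 0)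
    (hu_supp : Function.support u ⊆ Icc (-L) L) (hφ : Continuous φ)
    (hφ0 : ∀ t, |t| ≤ L → 0 ≤ φ t) (hφ1 : ∀ t, t ≠ 0 → |t| < L → 0 < φ t) :
    0 < ∫ t in Ioc (-π) π, φ t * u t := by
  have hcont : Continuous fun t => φ t * u t := hφ.mul hu_cont
  have hnn (t) : 0 ≤ φ t * u t := by
    by_cases h : u t = 0
    · simp [h]
    · exact mul_nonneg (hφ0 t (abs_le.2 (hu_supp h))) (hu_nonneg t)
  rw [setIntegral_pos_iff_support_of_nonneg_ae (ae_of_all _ hnn)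
    ((hcont.integrableOn_Icc).mono_set Ioc_subset_Icc_self)]
  have hsub : Function.support u \ {0, L, -L} ⊆
      (Function.support fun t => φ t * u t) ∩ Ioc (-π) π := by
    rintro t ⟨ht, ht'⟩
    simp only [mem_insert_iff, mem_singleton_iff, not_or] at ht'
    obtain ⟨h0, h1, h2⟩ := ht'
    have hI := hu_supp ht
    have hlt : |t| < L := abs_lt.2 ⟨lt_of_le_of_ne hI.1 (Ne.symm h2), lt_of_le_of_ne hI.2 h1⟩
    refine ⟨mul_ne_zero (hφ1 t h0 hlt).ne' ht, ?_, ?_⟩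
    · linarith [hI.1]
    · linarith [hI.2]
  refine lt_of_lt_of_le ?_ (measure_mono hsub)
  rw [measure_sdiff_null ((Set.toFinite _).measure_zero _)]
  refine IsOpen.measure_pos _ hu_cont.isOpen_support ?_
  rwa [Function.support_nonempty_iff]

/-- The sine part of the transform vanishes because `u` is even. -/
lemma fourierT_eq_ofReal (u : ℝ → ℝ) (hu_cont : Continuous u) (hu_even : ∀ t, u (-t) = u t)
    (x : ℝ) : fourierT u x = ((∫ t in Ioc (-π) π, Real.cos (x * t) * u t : ℝ) : ℂ) := by
  have hint (h : ℝ → ℂ) (hh : Continuous h) : IntegrableOn h (Ioc (-π) π) :=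
    hh.integrableOn_Icc.mono_set Ioc_subset_Icc_self
  have hodd : ∫ t in Ioc (-π) π, Real.sin (x * t) * u t = 0 := by
    have hle : -π ≤ π := by linarith [Real.pi_pos]
    rw [← intervalIntegral.integral_of_le hle]
    have h := intervalIntegral.integral_comp_neg (a := -π) (b := π)
      (fun t => Real.sin (x * t) * u t)
    simp only [mul_neg, Real.sin_neg, hu_even, neg_mul, neg_neg, intervalIntegral.integral_neg] at h
    linarith
  have hsplit (t : ℝ) : Complex.exp (-(Complex.I) * (x : ℂ) * (t : ℂ)) * (u t : ℂ)
      = ((Real.cos (x * t) * u t : ℝ) : ℂ) - Complex.I * ((Real.sin (x * t) * u t : ℝ) : ℂ) := by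
    rw [show -(Complex.I) * (x : ℂ) * (t : ℂ) = (-(x * t : ℂ)) * Complex.I by ring,
      Complex.exp_mul_I, Complex.cos_neg, Complex.sin_neg]
    push_cast; ring
  unfold fourierT
  simp_rw [hsplit]
  rw [integral_sub (hint _ (by fun_prop)) (hint _ (by fun_prop)), integral_const_mul,
    integral_complex_ofReal, integral_complex_ofReal, hodd]
  simp

theorem prop4_exists_dual_polynomial
    (N : ℕ) (hN : 0 < N) (u : ℝ → ℝ)
    (hu_cont : Continuous u) (hu_nonneg : ∀ t, 0 ≤ u t)
    (hu_even : ∀ t, u (-t) = u t) (hu_ne : u ≠ 0)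
    (hu_supp : Function.support u ⊆ Icc (-(π / (2 * N))) (π / (2 * N))) :
    ∃ τ : ℤ → ℝ,
      (∀ m ∈ Finset.Icc (-(N : ℤ) + 1) (N : ℤ), 0 < (-1 : ℝ) ^ m * τ m) ∧
      (∀ n : ℤ, -(N : ℤ) ≤ n → n ≤ (N : ℤ) →
        ∑ m ∈ Finset.Icc (-(N : ℤ) + 1) (N : ℤ),
          (τ m : ℂ) * Complex.exp (-(Complex.I) * π * (m : ℂ) * (n : ℂ) / (N : ℂ))
          = 1 / fourierT u n) := by
  have hN1 : (1 : ℝ) ≤ N := by exact_mod_cast hN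
  have hpi := Real.pi_pos
  set L : ℝ := π / (2 * N) with hLdef
  have hNL : N * L = π / 2 := by rw [hLdef]; field_simp
  have hL0 : 0 < L := by positivity
  have hL : L < π := by nlinarith
  set v : ℤ → ℝ := fun n => ∫ t in Ioc (-π) π, Real.cos (n * t) * u t with hv
  have habs (n : ℤ) (h1 : -(N : ℤ) ≤ n) (h2 : n ≤ N) : |(n : ℝ)| ≤ N := by
    rw [abs_le]; exact ⟨by exact_mod_cast h1, by exact_mod_cast h2⟩
  have hcos0 (n : ℤ) (h1 : -(N : ℤ) ≤ n) (h2 : n ≤ N) (t : ℝ) (ht : |t| ≤ L) :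
      0 ≤ Real.cos (n * t) := by
    have h : |n * t| ≤ π / 2 := by
      rw [abs_mul, ← hNL]
      exact mul_le_mul (habs n h1 h2) ht (abs_nonneg _) (by positivity)
    exact Real.cos_nonneg_of_mem_Icc (abs_le.1 h)
  have hcos1 (n : ℤ) (h1 : -(N : ℤ) ≤ n) (h2 : n ≤ N) (t : ℝ) (ht : |t| < L) :
      0 < Real.cos (n * t) := by
    have h : |n * t| < π / 2 := by
      rw [abs_mul, ← hNL]
      exact mul_lt_mul' (habs n h1 h2) ht (abs_nonneg _) (by positivity)
    exact Real.cos_pos_of_mem_Ioo (abs_lt.1 h)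
  have hvpos (n : ℤ) (h1 : -(N : ℤ) ≤ n) (h2 : n ≤ N) : 0 < v n :=
    integral_weight_pos u (fun t => Real.cos (n * t)) L hL hu_cont hu_nonneg hu_ne hu_supp
      (by fun_prop) (hcos0 n h1 h2) (fun t _ ht => hcos1 n h1 h2 t ht)
  have hint (h : ℝ → ℝ) (hh : Continuous h) : IntegrableOn h (Ioc (-π) π) :=
    hh.integrableOn_Icc.mono_set Ioc_subset_Icc_self
  have hconc (n : ℤ) (h1 : -(N : ℤ) < n) (h2 : n < N) : v (n + 1) + v (n - 1) < 2 * v n := by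
    have hp := integral_weight_pos u (fun t => Real.cos (n * t) * (1 - Real.cos t)) L hL hu_cont
      hu_nonneg hu_ne hu_supp (by fun_prop)
      (fun t ht => mul_nonneg (hcos0 n h1.le h2.le t ht) (sub_nonneg.2 (Real.cos_le_one t)))
      (fun t h0 ht => mul_pos (hcos1 n h1.le h2.le t ht) (by
        have hlt := abs_lt.1 ht
        refine sub_pos.2 (lt_of_le_of_ne (Real.cos_le_one t) fun h => h0 ?_)
        exact (Real.cos_eq_one_iff_of_lt_of_lt (by linarith) (by linarith)).1 h))
    have heq : 2 * v n - (v (n + 1) + v (n - 1))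
        = 2 * ∫ t in Ioc (-π) π, Real.cos (n * t) * (1 - Real.cos t) * u t := by
      simp only [hv]
      rw [← integral_add (hint _ (by fun_prop)) (hint _ (by fun_prop)), ← integral_const_mul,
        ← integral_const_mul, ← integral_sub (hint _ (by fun_prop)) (hint _ (by fun_prop))]
      congr 1
      ext t
      push_cast
      rw [add_mul, sub_mul, one_mul, Real.cos_add, Real.cos_sub]
      ring
    linarith
  obtain ⟨τ, hτ1, hτ2⟩ := exists_coeff_of_convex N hN (fun n => 1 / v n)
    (fun n => by simp [hv])
    (fun n h1 h2 => one_div_pos.2 (hvpos n h1 h2))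
    (fun n h1 h2 => by
      have ha := hvpos (n + 1) (by omega) (by omega)
      have hb := hvpos (n - 1) (by omega) (by omega)
      have hc := hvpos n h1.le h2.le
      have hlt := hconc n h1 h2
      generalize v (n + 1) = a at *
      generalize v (n - 1) = b at *
      generalize v n = c at *
      have e : 1 / a - 2 * (1 / c) + 1 / b = (c * (a + b) - 2 * (a * b)) / (a * b * c) := by
        field_simp; ring
      rw [e]
      refine div_pos ?_ (by positivity)
      nlinarith [sq_nonneg (a - b), mul_pos (add_pos ha hb) (sub_pos.2 hlt)])
  refine ⟨τ, hτ1, fun n h1 h2 => ?_⟩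
  rw [hτ2 n h1 h2]
  have := fourierT_eq_ofReal u hu_cont hu_even n
  push_cast at this ⊢
  rw [this]
end

section
/- Let N be a positive integer and let u : 𝕋 → ℝ be continuous, nonnegative, even, not identically zero, with support contained in [−π/(2N), π/(2N)]. Let τ_m, m = −N+1,…,N, be as in Proposition 4 (so that ∑_{m=−N+1}^{N} τ_m e^{−iπ m n/N} = 1/û(n) for |n| ≤ N), and let μ = ∑_{m=−N+1}^{N} τ_m δ_{π m/N} where δ_a is the Dirac measure at a ∈ 𝕋. Then for every trigonometric polynomial s of degree at most N, ∫_𝕋 (s ∗ u)(x − t) dμ(t) = s(x) for all x; that is, convolution with μ is the inverse on T_N of the convolution operator A_u(s) = s ∗ u. -/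
/-!
The exponentials `e_k(y) = exp(iky)` are eigenfunctions of convolution with `u`, with eigenvalue
`û(k)`, and of convolution with `μ`, with eigenvalue `∑ τ_m exp(-iπmk/N) = 1 / û(k)` for `|k| ≤ N`.
Hence the composition of the two convolutions fixes every `e_k` with `|k| ≤ N`, provided that
`û(k) ≠ 0` (`fourierT_ne_zero`). This holds because `Re û(k) = ∫ cos(kt) u(t) dt`, and `cos(kt)` is
positive on the interior of `[-π/(2N), π/(2N)]`, an interval which contains the support of `u`.
-/

open Real MeasureTheory Set

/-- In fact `Re û(n) > 0` for `|n| ≤ N`: its integrand `cos(nt) u(t)` is continuous, nonnegative,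
compactly supported and not identically zero. -/
lemma fourierT_ne_zero (N : ℕ) (hN : 0 < N) (u : ℝ → ℝ)
    (hu_cont : Continuous u) (hu_nonneg : ∀ t, 0 ≤ u t) (hu_ne : u ≠ 0)
    (hu_supp : Function.support u ⊆ Icc (-(π / (2 * N))) (π / (2 * N)))
    (n : ℤ) (hn1 : -(N : ℤ) ≤ n) (hn2 : n ≤ (N : ℤ)) : fourierT u n ≠ 0 := by
  have hN1 : (1 : ℝ) ≤ N := by exact_mod_cast hN
  have hNpos : (0 : ℝ) < N := by linarith
  -- The open set `{u ≠ 0}` lies in the interior of the interval, so the endpoints,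
  -- where `cos (n * t)` may vanish, are excluded.
  have hsupp : ∀ t, u t ≠ 0 → t ∈ Ioo (-(π / (2 * N))) (π / (2 * N)) := by
    intro t ht
    rw [← interior_Icc]
    exact interior_maximal hu_supp hu_cont.isOpen_support ht
  have hcos : ∀ t, u t ≠ 0 → 0 < Real.cos (n * t) := by
    intro t ht
    have h1 : |t| < π / (2 * N) := abs_lt.2 (hsupp t ht)
    have hn : |(n : ℝ)| ≤ N := by
      rw [abs_le]; constructor
      · exact_mod_cast hn1
      · exact_mod_cast hn2
    have h2 : |(n : ℝ) * t| < π / 2 := by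
      rw [abs_mul]
      calc |(n : ℝ)| * |t| ≤ N * |t| := by gcongr
        _ < N * (π / (2 * N)) := by gcongr
        _ = π / 2 := by field_simp
    exact Real.cos_pos_of_mem_Ioo (abs_lt.1 h2)
  have hpos : 0 < ∫ t, Real.cos (n * t) * u t := by
    obtain ⟨t₀, ht₀⟩ := Function.ne_iff.1 hu_ne
    refine Continuous.integral_pos_of_hasCompactSupport_nonneg_nonzero (x := t₀) (by fun_prop) ?_ ?_ ?_
    · exact (HasCompactSupport.intro (isCompact_Icc (a := -(π / (2 * N))) (b := π / (2 * N)))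
        fun t ht => by_contra fun h => ht (hu_supp h)).mul_left
    · intro t
      by_cases ht : u t = 0
      · simp [ht]
      · exact mul_nonneg (hcos t ht).le (hu_nonneg t)
    · exact mul_ne_zero (hcos t₀ ht₀).ne' ht₀
  have hle : π / (2 * N) ≤ π := by
    apply div_le_self Real.pi_pos.le; linarith
  have hint : ∫ t in Ioc (-π) π, Real.cos (n * t) * u t = ∫ t, Real.cos (n * t) * u t := by
    apply setIntegral_eq_integral_of_forall_compl_eq_zero
    intro t ht
    by_contra h
    have h1 := hsupp t (right_ne_zero_of_mul h)
    exact ht ⟨by linarith [h1.1], by linarith [h1.2]⟩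
  have hre : (fourierT u n).re = ∫ t in Ioc (-π) π, Real.cos (n * t) * u t := by
    have hi : Integrable (fun t : ℝ => Complex.exp (-(Complex.I) * ((n : ℝ) : ℂ) * (t : ℂ)) * (u t : ℂ))
        (volume.restrict (Ioc (-π) π)) :=
      Continuous.integrableOn_Ioc (by fun_prop)
    unfold fourierT
    rw [← Complex.reCLM_apply, ← Complex.reCLM.integral_comp_comm hi]
    congr 1
    ext t
    simp [Complex.exp_re]
  intro h
  rw [h, hint] at hre
  simp only [Complex.zero_re] at hre
  exact hpos.ne hre

/-- `(s ∗ u)(y) = ∑ c_k û(k) exp(iky)` for `s = ∑ c_k exp(ik·)`. -/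
lemma integral_trigPoly_mul (S : Finset ℤ) (u : ℝ → ℝ) (hu_cont : Continuous u)
    (c : ℤ → ℂ) (y : ℝ) :
    ∫ t in Ioc (-π) π, (∑ k ∈ S, c k * Complex.exp (Complex.I * (k : ℂ) * ((y - t : ℝ) : ℂ)))
        * (u t : ℂ)
      = ∑ k ∈ S, c k * Complex.exp (Complex.I * (k : ℂ) * (y : ℂ)) * fourierT u k := by
  simp_rw [Finset.sum_mul]
  rw [integral_finsetSum]
  · refine Finset.sum_congr rfl fun k _ => ?_
    rw [fourierT, ← integral_const_mul]
    congr 1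
    ext t
    have : Complex.exp (Complex.I * (k : ℂ) * ((y - t : ℝ) : ℂ))
        = Complex.exp (Complex.I * (k : ℂ) * (y : ℂ))
          * Complex.exp (-(Complex.I) * ((k : ℝ) : ℂ) * (t : ℂ)) := by
      rw [← Complex.exp_add]
      congr 1
      push_cast
      ring
    rw [this]
    ring
  · intro k _
    exact Continuous.integrableOn_Ioc (by fun_prop)

/-- Convolution with the discrete measure μ = ∑_{m=-N+1}^{N} τ_m δ_{πm/N} inverts the
convolution operator A_u(s) = s ∗ u on T_N: for every trigonometric polynomial s of degree
at most N, ∫_𝕋 (s ∗ u)(x - t) dμ(t) = ∑_m τ_m (s ∗ u)(x - πm/N) = s(x). -/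
theorem prop5_inverse_of_convolution
    (N : ℕ) (hN : 0 < N) (u : ℝ → ℝ)
    (hu_cont : Continuous u) (hu_nonneg : ∀ t, 0 ≤ u t)
    (hu_even : ∀ t, u (-t) = u t) (hu_ne : u ≠ 0)
    (hu_supp : Function.support u ⊆ Icc (-(π / (2 * N))) (π / (2 * N)))
    (τ : ℤ → ℝ)
    (hτ : ∀ n : ℤ, -(N : ℤ) ≤ n → n ≤ (N : ℤ) →
      ∑ m ∈ Finset.Icc (-(N : ℤ) + 1) (N : ℤ),
        (τ m : ℂ) * Complex.exp (-(Complex.I) * π * (m : ℂ) * (n : ℂ) / (N : ℂ))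
        = 1 / fourierT u n)
    (c : ℤ → ℂ) (s : ℝ → ℂ)
    (hs : ∀ y : ℝ, s y = ∑ k ∈ Finset.Icc (-(N : ℤ)) (N : ℤ),
      c k * Complex.exp (Complex.I * (k : ℂ) * (y : ℂ))) :
    ∀ x : ℝ,
      ∑ m ∈ Finset.Icc (-(N : ℤ) + 1) (N : ℤ),
        (τ m : ℂ) * ∫ t in Ioc (-π) π, s (x - π * m / N - t) * (u t : ℂ)
      = s x := by
  intro x
  simp_rw [hs, integral_trigPoly_mul _ u hu_cont, Finset.mul_sum]
  rw [Finset.sum_comm]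
  refine Finset.sum_congr rfl fun k hk => ?_
  rw [Finset.mem_Icc] at hk
  have hne := fourierT_ne_zero N hN u hu_cont hu_nonneg hu_ne hu_supp k hk.1 hk.2
  calc _ = ∑ m ∈ Finset.Icc (-(N : ℤ) + 1) (N : ℤ),
        ((τ m : ℂ) * Complex.exp (-(Complex.I) * π * (m : ℂ) * (k : ℂ) / (N : ℂ)))
          * (c k * Complex.exp (Complex.I * (k : ℂ) * (x : ℂ)) * fourierT u k) := by
        refine Finset.sum_congr rfl fun m _ => ?_
        have : Complex.exp (Complex.I * (k : ℂ) * ((x - π * m / N : ℝ) : ℂ))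
            = Complex.exp (-(Complex.I) * π * (m : ℂ) * (k : ℂ) / (N : ℂ))
              * Complex.exp (Complex.I * (k : ℂ) * (x : ℂ)) := by
          rw [← Complex.exp_add]
          congr 1
          push_cast
          ring
        rw [this]
        ring
    _ = _ := by
        rw [← Finset.sum_mul, hτ k hk.1 hk.2]
        field_simp
end

section
/- Let N be a positive integer, 1 ≤ p < ∞, and let u : 𝕋 → ℝ be continuous, nonnegative, even, not identically zero, with support contained in [−π/(2N), π/(2N)]. Let τ_m, m = −N+1,…,N, be as in Proposition 4 and μ = ∑_{m=−N+1}^{N} τ_m δ_{π m/N}. Then the operator A_u^{−1}(s)(x) = ∫_𝕋 s(x − t) dμ(t) on T_N equipped with the L^p(𝕋) norm has operator norm equal to the total variation ‖μ‖ = ∑_{m=−N+1}^{N} |τ_m|, and this common value equals 1/û(N). -/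
/-!
The operator `s ↦ ∑ τ_m s(· - πm/N)` is a combination of translations, and translations are
isometries of `L^p(𝕋)`; Minkowski's inequality therefore bounds its norm by `∑ |τ_m|`
(`lpNormT_sum_translate_le`). The bound is attained: `e^{iNx}` translated by `πm/N` is multiplied by
`(-1)^m`, and since `(-1)^m τ_m = |τ_m|`, the normalised exponential of frequency `N` is an
eigenvector with eigenvalue `∑ |τ_m|`. The same identity, read off from the hypothesis on `τ` at
frequency `n = N`, says that this eigenvalue is `1/û(N)`.
-/

open Real MeasureTheory Set

-- The L^p(𝕋) norm, 𝕋 = (-π, π].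
noncomputable def lpNormT (p : ℝ) (f : ℝ → ℂ) : ℝ :=
  (∫ y in Set.Ioc (-π) π, ‖f y‖ ^ p) ^ (1 / p)

-- the trigonometric polynomial with coefficients c, of degree at most N
noncomputable def trigPoly (N : ℕ) (c : ℤ → ℂ) : ℝ → ℂ :=
  fun y => ∑ k ∈ Finset.Icc (-(N : ℤ)) (N : ℤ),
    c k * Complex.exp (Complex.I * (k : ℂ) * (y : ℂ))

lemma memLp_Ioc_of_continuous {f : ℝ → ℂ} (hf : Continuous f) (q : ENNReal) :
    MemLp f q (volume.restrict (Ioc (-π) π)) := by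
  obtain ⟨C, hC⟩ := isCompact_Icc.exists_bound_of_continuousOn (s := Icc (-π) π) hf.continuousOn
  refine MemLp.of_bound hf.aestronglyMeasurable C ?_
  exact (ae_restrict_iff' measurableSet_Ioc).2
    (Filter.Eventually.of_forall fun x hx => hC x (Ioc_subset_Icc_self hx))

/-- For continuous functions `lpNormT` is Mathlib's `L^p` norm on `(-π, π]`, which makes
Minkowski's inequality available. -/
lemma lpNormT_eq_eLpNorm {p : ℝ} (hp : 1 ≤ p) {f : ℝ → ℂ} (hf : Continuous f) :
    lpNormT p f = (eLpNorm f (ENNReal.ofReal p) (volume.restrict (Ioc (-π) π))).toReal := by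
  have h0 : ENNReal.ofReal p ≠ 0 := by
    simp only [ne_eq, ENNReal.ofReal_eq_zero, not_le]; linarith
  rw [(memLp_Ioc_of_continuous hf _).eLpNorm_eq_integral_rpow_norm h0 ENNReal.ofReal_ne_top,
    ENNReal.toReal_ofReal (by linarith : 0 ≤ p), ENNReal.toReal_ofReal (by positivity), lpNormT,
    one_div]

lemma lpNormT_const_mul {p : ℝ} (hp : 1 ≤ p) (a : ℂ) {f : ℝ → ℂ} (hf : Continuous f) :
    lpNormT p (fun x => a * f x) = ‖a‖ * lpNormT p f := by
  rw [lpNormT_eq_eLpNorm hp hf, lpNormT_eq_eLpNorm hp (f := fun x => a * f x) (by fun_prop)]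
  have := eLpNorm_const_smul a f (ENNReal.ofReal p) (volume.restrict (Ioc (-π) π))
  change (eLpNorm (a • f) _ _).toReal = _
  rw [this, ENNReal.toReal_mul, toReal_enorm]

lemma lpNormT_translate {p : ℝ} {f : ℝ → ℂ} (hf : Function.Periodic f (2 * π)) (a : ℝ) :
    lpNormT p (fun x => f (x - a)) = lpNormT p f := by
  have hle : -π ≤ π := by linarith [pi_pos]
  have hg : Function.Periodic (fun x => ‖f x‖ ^ p) (2 * π) := fun x => by simp only [hf x]
  have key : ∫ y in Ioc (-π) π, ‖f (y - a)‖ ^ p = ∫ y in Ioc (-π) π, ‖f y‖ ^ p := by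
    rw [← intervalIntegral.integral_of_le hle, ← intervalIntegral.integral_of_le hle,
      intervalIntegral.integral_comp_sub_right (fun x => ‖f x‖ ^ p)]
    have h := hg.intervalIntegral_add_eq (-π - a) (-π)
    rwa [show -π - a + 2 * π = π - a by ring, show -π + 2 * π = π by ring] at h
  unfold lpNormT
  rw [key]

lemma lpNormT_sum_translate_le {p : ℝ} (hp : 1 ≤ p) {f : ℝ → ℂ} (hf : Continuous f)
    (hper : Function.Periodic f (2 * π)) (S : Finset ℤ) (τ : ℤ → ℝ) (a : ℤ → ℝ) :
    lpNormT p (fun x => ∑ m ∈ S, (τ m : ℂ) * f (x - a m)) ≤ (∑ m ∈ S, |τ m|) * lpNormT p f := by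
  have hc : ∀ m, Continuous fun x => f (x - a m) := fun m => by fun_prop
  have hc' : ∀ m, Continuous fun x => (τ m : ℂ) * f (x - a m) := fun m => by fun_prop
  have h1 : (1 : ENNReal) ≤ ENNReal.ofReal p := by simpa using hp
  have hfin := fun m => (memLp_Ioc_of_continuous (hc' m) (ENNReal.ofReal p)).eLpNorm_ne_top
  have mink := eLpNorm_sum_le (μ := volume.restrict (Ioc (-π) π)) (s := S)
    (f := fun m x => (τ m : ℂ) * f (x - a m))
    (fun m _ => (hc' m).aestronglyMeasurable) h1
  rw [lpNormT_eq_eLpNorm hp (continuous_finsetSum _ fun m _ => hc' m), Finset.sum_mul]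
  have e : (fun x => ∑ m ∈ S, (τ m : ℂ) * f (x - a m))
      = ∑ m ∈ S, fun x => (τ m : ℂ) * f (x - a m) := by
    ext x; simp
  rw [e]
  refine (ENNReal.toReal_mono (ENNReal.sum_ne_top.2 fun m _ => hfin m) mink).trans_eq ?_
  rw [ENNReal.toReal_sum fun m _ => hfin m]
  refine Finset.sum_congr rfl fun m _ => ?_
  rw [← lpNormT_eq_eLpNorm hp (hc' m), lpNormT_const_mul hp _ (hc m), lpNormT_translate hper,
    Complex.norm_real, Real.norm_eq_abs]

lemma continuous_trigPoly_s7 (N : ℕ) (c : ℤ → ℂ) : Continuous (trigPoly N c) := by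
  unfold trigPoly; fun_prop

lemma periodic_trigPoly_s7 (N : ℕ) (c : ℤ → ℂ) : Function.Periodic (trigPoly N c) (2 * π) := by
  intro x
  refine Finset.sum_congr rfl fun k _ => ?_
  congr 1
  rw [Complex.exp_eq_exp_iff_exists_int]
  exact ⟨k, by push_cast; ring⟩

lemma trigPoly_single (N : ℕ) (a : ℂ) (x : ℝ) :
    trigPoly N (Pi.single (N : ℤ) a) x = a * Complex.exp (Complex.I * N * x) := by
  unfold trigPoly
  rw [Finset.sum_eq_single (N : ℤ)]
  · simp
  · intro k _ hk
    simp [Pi.single_eq_of_ne hk]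
  · intro h
    simp at h

lemma exp_neg_I_pi_mul_int (m : ℤ) : Complex.exp (-Complex.I * π * m) = (-1 : ℂ) ^ m := by
  rw [show -Complex.I * π * m = m * (-(π * Complex.I)) by ring, Complex.exp_int_mul,
    Complex.exp_neg, Complex.exp_pi_mul_I]
  norm_num

lemma abs_eq_neg_one_zpow_mul {m : ℤ} {t : ℝ} (h : 0 < (-1 : ℝ) ^ m * t) :
    |t| = (-1 : ℝ) ^ m * t := by
  rw [← abs_of_pos h, abs_mul, abs_zpow]
  simp

/-- The operator A_u^{-1}(s)(x) = ∫_𝕋 s(x-t) dμ(t) = ∑_{m=-N+1}^{N} τ_m s(x - πm/N)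
(μ = ∑ τ_m δ_{πm/N}) has, on T_N with the L^p(𝕋) norm, operator norm equal to the total
variation ‖μ‖ = ∑_{m=-N+1}^{N} |τ_m|, and this common value equals 1/û(N). -/
theorem prop5_norm_of_inverse
    (N : ℕ) (hN : 0 < N) (p : ℝ) (hp : 1 ≤ p) (u : ℝ → ℝ)
    (hu_cont : Continuous u) (hu_nonneg : ∀ t, 0 ≤ u t)
    (hu_even : ∀ t, u (-t) = u t) (hu_ne : u ≠ 0)
    (hu_supp : Function.support u ⊆ Icc (-(π / (2 * N))) (π / (2 * N)))
    (τ : ℤ → ℝ)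
    (hτ_sign : ∀ m ∈ Finset.Icc (-(N : ℤ) + 1) (N : ℤ), 0 < (-1 : ℝ) ^ m * τ m)
    (hτ : ∀ n : ℤ, -(N : ℤ) ≤ n → n ≤ (N : ℤ) →
      ∑ m ∈ Finset.Icc (-(N : ℤ) + 1) (N : ℤ),
        (τ m : ℂ) * Complex.exp (-(Complex.I) * π * (m : ℂ) * (n : ℂ) / (N : ℂ))
        = 1 / fourierT u n) :
    sSup {y : ℝ | ∃ c : ℤ → ℂ, lpNormT p (trigPoly N c) = 1 ∧
        y = lpNormT p (fun x => ∑ m ∈ Finset.Icc (-(N : ℤ) + 1) (N : ℤ),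
          (τ m : ℂ) * trigPoly N c (x - π * m / N))}
      = ∑ m ∈ Finset.Icc (-(N : ℤ) + 1) (N : ℤ), |τ m| ∧
    ((∑ m ∈ Finset.Icc (-(N : ℤ) + 1) (N : ℤ), |τ m| : ℝ) : ℂ) = 1 / fourierT u N := by
  have hN' : (N : ℂ) ≠ 0 := by exact_mod_cast hN.ne'
  have habs : ∀ m ∈ Finset.Icc (-(N : ℤ) + 1) (N : ℤ),
      ((|τ m| : ℝ) : ℂ) = (τ m : ℂ) * (-1 : ℂ) ^ m := fun m hm => by
    rw [abs_eq_neg_one_zpow_mul (hτ_sign m hm)]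
    push_cast
    ring
  refine ⟨IsGreatest.csSup_eq ⟨?_, ?_⟩, ?_⟩
  · -- `a` normalises `e^{iNx}`, whose `L^p` norm is `(2π)^{1/p}`.
    set a : ℝ := ((2 * π) ^ (1 / p))⁻¹ with ha
    have ha0 : 0 < a := by positivity
    set s := trigPoly N (Pi.single (N : ℤ) (a : ℂ)) with hs
    have hnorm : lpNormT p s = 1 := by
      have hx : ∀ x, ‖s x‖ = a := fun x => by
        rw [hs, trigPoly_single, norm_mul, Complex.norm_exp]
        simp [abs_of_pos ha0]
      simp only [lpNormT, hx]
      rw [setIntegral_const, Real.volume_real_Ioc_of_le (by linarith [pi_pos]), smul_eq_mul,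
        Real.mul_rpow (by linarith [pi_pos]) (by positivity), ← Real.rpow_mul ha0.le,
        mul_one_div_cancel (by linarith), Real.rpow_one, show π - -π = 2 * π by ring, ha]
      exact mul_inv_cancel₀ (by positivity)
    refine ⟨_, hnorm, ?_⟩
    have heig : ∀ x : ℝ, ∑ m ∈ Finset.Icc (-(N : ℤ) + 1) (N : ℤ), (τ m : ℂ) * s (x - π * m / N)
        = ((∑ m ∈ Finset.Icc (-(N : ℤ) + 1) (N : ℤ), |τ m| : ℝ) : ℂ) * s x := fun x => by
      rw [Complex.ofReal_sum, Finset.sum_mul]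
      refine Finset.sum_congr rfl fun m hm => ?_
      rw [habs m hm, ← exp_neg_I_pi_mul_int, hs, trigPoly_single, trigPoly_single]
      have : Complex.I * N * ((x - π * m / N : ℝ) : ℂ)
          = -Complex.I * π * m + Complex.I * N * x := by
        push_cast
        field_simp
        ring
      rw [this, Complex.exp_add]
      ring
    simp only [← hs, heig]
    rw [lpNormT_const_mul hp _ (continuous_trigPoly_s7 N _), hnorm, mul_one, Complex.norm_real,
      Real.norm_of_nonneg (Finset.sum_nonneg fun m _ => abs_nonneg _)]
  · rintro y ⟨c, hc, rfl⟩
    have := lpNormT_sum_translate_le hp (continuous_trigPoly_s7 N c) (periodic_trigPoly_s7 N c)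
      (Finset.Icc (-(N : ℤ) + 1) (N : ℤ)) τ (fun m => π * m / N)
    rwa [hc, mul_one] at this
  · have h := hτ N (by omega) le_rfl
    simp only [Int.cast_natCast] at h
    rw [← h, Complex.ofReal_sum]
    refine Finset.sum_congr rfl fun m hm => ?_
    rw [habs m hm, ← exp_neg_I_pi_mul_int, mul_div_cancel_right₀ _ hN']
end

section
/- Let N be a positive integer and let u : 𝕋 → ℝ be continuous, nonnegative, even, not identically zero, with support contained in [−π/(2N), π/(2N)]. Let v(x) = 1/û(x) for x ∈ [−N, N]. Then v is well defined, even, and positive on [−N, N], and v′(x) > 0 and v″(x) > 0 for all x ∈ (0, N]; in particular v is strictly increasing and strictly convex on [0, N]. -/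
/-!
Let `F x = ∫ t in -π..π, u t * cos (x * t)`. Since `u` is even, `fourierT u x = F x`, so
`vFun u = 1 / F`. Differentiating under the integral sign,
`F' x = -∫ u t * t * sin (x * t)` and `F'' x = -∫ u t * t ^ 2 * cos (x * t)`.

The support of the continuous function `u` is open, hence contained in the open interval
`(-π / (2N), π / (2N))`. So `|x * t| < π / 2` whenever `|x| ≤ N` and `u t ≠ 0`. This gives
`F > 0` and `F'' ≤ 0` on `[-N, N]`, and `F' < 0` on `(0, N]` because the nonempty open support
contains a point `t ≠ 0`. The claims follow from
`(1 / F)' = -F' / F ^ 2` and `(1 / F)'' = (2 * F' ^ 2 - F * F'') / F ^ 3`.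
-/

open Real MeasureTheory Set

-- v = 1/û (û is real-valued under the hypotheses below, so we take the real part).
noncomputable def vFun (u : ℝ → ℝ) (x : ℝ) : ℝ := ((fourierT u x).re)⁻¹

/-- Differentiation under the integral sign for `x ↦ ∫ h t * φ (x * t)`, used with `φ` the sine
and the cosine. -/
lemma hasDerivAt_integral_mul_comp {h φ φ' : ℝ → ℝ} (hh : Continuous h)
    (hφ : ∀ y, HasDerivAt φ (φ' y) y) (hφ' : Continuous φ') (hb : ∀ y, |φ' y| ≤ 1) (x : ℝ) :
    HasDerivAt (fun x => ∫ t in (-π)..π, h t * φ (x * t))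
      (∫ t in (-π)..π, h t * t * φ' (x * t)) x := by
  have hc : Continuous φ := continuous_iff_continuousAt.2 fun y => (hφ y).continuousAt
  refine (intervalIntegral.hasDerivAt_integral_of_dominated_loc_of_deriv_le
    (F := fun x t => h t * φ (x * t)) (F' := fun x t => h t * t * φ' (x * t))
    (bound := fun t => |h t * t|) (s := Set.univ) Filter.univ_mem ?_ ?_ ?_ ?_ ?_ ?_).2
  · exact Filter.Eventually.of_forall fun y =>
      Continuous.aestronglyMeasurable (by fun_prop)
  · exact Continuous.intervalIntegrable (by fun_prop) _ _
  · exact Continuous.aestronglyMeasurable (by fun_prop)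
  · refine Filter.Eventually.of_forall fun t _ y _ => ?_
    rw [Real.norm_eq_abs, abs_mul]
    exact mul_le_of_le_one_right (abs_nonneg _) (hb _)
  · exact Continuous.intervalIntegrable (by fun_prop) _ _
  · refine Filter.Eventually.of_forall fun t _ y _ => ?_
    have h1 : HasDerivAt (fun y : ℝ => y * t) t y := by
      simpa using (hasDerivAt_id y).mul_const t
    have h2 := ((hφ (y * t)).comp y h1).const_mul (h t)
    exact h2.congr_deriv (by ring)

/-- For even `u` the sine part of the Fourier integral vanishes, so `fourierT u x` is the real
cosine integral. -/
lemma fourierT_eq_cos_integral {u : ℝ → ℝ} (hu : Continuous u) (he : ∀ t, u (-t) = u t) (x : ℝ) :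
    fourierT u x = ((∫ t in (-π)..π, u t * Real.cos (x * t) : ℝ) : ℂ) := by
  have hodd : ∫ t in (-π)..π, u t * Real.sin (x * t) = 0 := by
    have h := intervalIntegral.integral_comp_neg (a := -π) (b := π)
      (fun t => u t * Real.sin (x * t))
    simp only [he, mul_neg, Real.sin_neg, neg_neg, intervalIntegral.integral_neg] at h
    linarith
  have hπ : -π ≤ π := by linarith [Real.pi_pos]
  rw [fourierT, ← intervalIntegral.integral_of_le hπ]
  have hpt : ∀ t : ℝ, Complex.exp (-(Complex.I) * (x : ℂ) * (t : ℂ)) * (u t : ℂ)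
      = ((u t * Real.cos (x * t) : ℝ) : ℂ) - ((u t * Real.sin (x * t) : ℝ) : ℂ) * Complex.I := by
    intro t
    have : -(Complex.I) * (x : ℂ) * (t : ℂ) = (-(x * t : ℂ)) * Complex.I := by ring
    rw [this, Complex.exp_mul_I, Complex.cos_neg, Complex.sin_neg]
    push_cast
    ring
  simp_rw [hpt]
  rw [intervalIntegral.integral_sub, intervalIntegral.integral_mul_const,
    intervalIntegral.integral_ofReal, intervalIntegral.integral_ofReal, hodd]
  · simp
  · exact Continuous.intervalIntegrable (by fun_prop) _ _
  · exact Continuous.intervalIntegrable (by fun_prop) _ _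

/-- v = 1/û is well defined (û is real and nonvanishing), even, and positive on [-N, N],
with v′ > 0 and v″ > 0 on (0, N]; in particular v is strictly increasing and strictly
convex on [0, N]. -/
theorem v_increasing_convex
    (N : ℕ) (hN : 0 < N) (u : ℝ → ℝ)
    (hu_cont : Continuous u) (hu_nonneg : ∀ t, 0 ≤ u t)
    (hu_even : ∀ t, u (-t) = u t) (hu_ne : u ≠ 0)
    (hu_supp : Function.support u ⊆ Icc (-(π / (2 * N))) (π / (2 * N))) :
    (∀ x ∈ Icc (-(N : ℝ)) (N : ℝ), (fourierT u x).im = 0 ∧ 0 < (fourierT u x).re) ∧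
    (∀ x ∈ Icc (-(N : ℝ)) (N : ℝ), 0 < vFun u x ∧ vFun u (-x) = vFun u x) ∧
    (∀ x ∈ Ioc (0 : ℝ) (N : ℝ), 0 < deriv (vFun u) x ∧ 0 < deriv (deriv (vFun u)) x) ∧
    StrictMonoOn (vFun u) (Icc (0 : ℝ) (N : ℝ)) ∧
    StrictConvexOn ℝ (Icc (0 : ℝ) (N : ℝ)) (vFun u) := by
  have hNr : (1 : ℝ) ≤ N := by exact_mod_cast hN
  have hπ := Real.pi_pos
  have hopen : IsOpen (Function.support u) := hu_cont.isOpen_support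
  have hsupp : ∀ t, u t ≠ 0 → |t| < π / (2 * N) := by
    intro t ht
    have h := (hopen.subset_interior_iff.2 hu_supp) ht
    rw [interior_Icc] at h
    exact abs_lt.2 h
  obtain ⟨t₀, ht₀, ht₀'⟩ : ∃ t₀, u t₀ ≠ 0 ∧ t₀ ≠ 0 := by
    obtain ⟨t, h1, h2⟩ := (dense_compl_singleton (0 : ℝ)).inter_open_nonempty _ hopen
      (Function.support_nonempty_iff.2 hu_ne)
    exact ⟨t, h1, h2⟩
  have hu₀ : 0 < u t₀ := lt_of_le_of_ne (hu_nonneg _) (Ne.symm ht₀)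
  have ht₀m : t₀ ∈ Icc (-π) π := by
    have h := hsupp t₀ ht₀
    have h2 : π / (2 * N) ≤ π := div_le_self hπ.le (by linarith)
    exact abs_le.1 (h.le.trans h2)
  have hang : ∀ x ∈ Icc (-(N : ℝ)) N, ∀ t, u t ≠ 0 → |x * t| < π / 2 := by
    intro x hx t ht
    rw [abs_mul]
    have h1 : |x| ≤ N := abs_le.2 hx
    calc |x| * |t| ≤ N * |t| := by gcongr
      _ < N * (π / (2 * N)) := by
        have := hsupp t ht
        gcongr
      _ = π / 2 := by field_simp
  have hcos : ∀ x ∈ Icc (-(N : ℝ)) N, ∀ t, u t ≠ 0 → 0 < Real.cos (x * t) := fun x hx t ht =>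
    Real.cos_pos_of_mem_Ioo (abs_lt.1 (hang x hx t ht))
  have hsin : ∀ x ∈ Ioc (0 : ℝ) N, ∀ t, u t ≠ 0 → t ≠ 0 → 0 < t * Real.sin (x * t) := by
    intro x hx t ht h0
    have ha := abs_lt.1 (hang x ⟨by linarith [hx.1], hx.2⟩ t ht)
    rcases lt_or_gt_of_ne h0 with h | h
    · exact mul_pos_of_neg_of_neg h
        (Real.sin_neg_of_neg_of_neg_pi_lt (mul_neg_of_pos_of_neg hx.1 h) (by linarith [ha.1]))
    · exact mul_pos h
        (Real.sin_pos_of_pos_of_lt_pi (mul_pos hx.1 h) (by linarith [ha.2]))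
  -- `S` is `-F'` and `C` is `-F''`.
  set F : ℝ → ℝ := fun x => ∫ t in (-π)..π, u t * Real.cos (x * t) with hF
  set S : ℝ → ℝ := fun x => ∫ t in (-π)..π, u t * t * Real.sin (x * t) with hS
  set C : ℝ → ℝ := fun x => ∫ t in (-π)..π, u t * t * t * Real.cos (x * t) with hC
  have hFpos : ∀ x ∈ Icc (-(N : ℝ)) N, 0 < F x := by
    intro x hx
    refine intervalIntegral.integral_pos (by linarith)
      (Continuous.continuousOn (by fun_prop)) ?_ ⟨t₀, ht₀m, mul_pos hu₀ (hcos x hx t₀ ht₀)⟩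
    intro t _
    by_cases h : u t = 0
    · simp [h]
    · exact mul_nonneg (hu_nonneg t) (hcos x hx t h).le
  have hSpos : ∀ x ∈ Ioc (0 : ℝ) N, 0 < S x := by
    intro x hx
    refine intervalIntegral.integral_pos (by linarith)
      (Continuous.continuousOn (by fun_prop)) ?_
      ⟨t₀, ht₀m, by rw [mul_assoc]; exact mul_pos hu₀ (hsin x hx t₀ ht₀ ht₀')⟩
    intro t _
    by_cases h : u t = 0
    · simp [h]
    by_cases h0 : t = 0
    · simp [h0]
    · rw [mul_assoc]
      exact mul_nonneg (hu_nonneg t) (hsin x hx t h h0).le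
  have hCnonneg : ∀ x ∈ Icc (-(N : ℝ)) N, 0 ≤ C x := by
    intro x hx
    refine intervalIntegral.integral_nonneg (by linarith) fun t _ => ?_
    by_cases h : u t = 0
    · simp [h]
    · rw [mul_assoc (u t)]
      exact mul_nonneg (mul_nonneg (hu_nonneg t) (mul_self_nonneg t)) (hcos x hx t h).le
  have hFd : ∀ x, HasDerivAt F (-S x) x := by
    intro x
    have h := hasDerivAt_integral_mul_comp hu_cont Real.hasDerivAt_cos
      (by fun_prop) (fun y => by rw [abs_neg]; exact Real.abs_sin_le_one y) x
    simpa only [mul_neg, intervalIntegral.integral_neg] using h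
  have hSd : ∀ x, HasDerivAt S (C x) x := fun x =>
    hasDerivAt_integral_mul_comp (h := fun t => u t * t) (by fun_prop) Real.hasDerivAt_sin
      Real.continuous_cos Real.abs_cos_le_one x
  have hfour : ∀ x, fourierT u x = (F x : ℂ) := fourierT_eq_cos_integral hu_cont hu_even
  have hv : vFun u = fun x => (F x)⁻¹ := by
    funext x
    rw [vFun, hfour, Complex.ofReal_re]
  have hvd : ∀ x, F x ≠ 0 → HasDerivAt (vFun u) (S x / F x ^ 2) x := by
    intro x hx
    rw [hv]
    simpa using (hFd x).fun_inv hx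
  have hvdd : ∀ x, F x ≠ 0 →
      deriv (deriv (vFun u)) x = (C x * F x + 2 * S x ^ 2) / F x ^ 3 := by
    intro x hx
    -- The formula for `v'` holds near `x` since `F` is continuous, including at `x = N`.
    have hev : deriv (vFun u) =ᶠ[nhds x] fun y => S y / F y ^ 2 :=
      ((hFd x).continuousAt.eventually_ne hx).mono fun y hy => (hvd y hy).deriv
    rw [hev.deriv_eq, ((hSd x).fun_div ((hFd x).fun_pow 2) (pow_ne_zero 2 hx)).deriv]
    field_simp
    ring
  have hsub : ∀ x ∈ Icc (0 : ℝ) N, x ∈ Icc (-(N : ℝ)) N := fun x hx =>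
    ⟨by linarith [hx.1], hx.2⟩
  have hd : ∀ x ∈ Ioc (0 : ℝ) (N : ℝ), 0 < deriv (vFun u) x ∧ 0 < deriv (deriv (vFun u)) x := by
    intro x hx
    have hx' := hsub x ⟨hx.1.le, hx.2⟩
    have h1 := hFpos x hx'
    have h2 := hSpos x hx
    have h3 := hCnonneg x hx'
    rw [(hvd x h1.ne').deriv, hvdd x h1.ne']
    constructor <;> positivity
  have hcont : ContinuousOn (vFun u) (Icc (0 : ℝ) N) := fun x hx =>
    (hvd x (hFpos x (hsub x hx)).ne').continuousAt.continuousWithinAt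
  refine ⟨?_, ?_, hd, ?_, ?_⟩
  · intro x hx
    rw [hfour]
    exact ⟨Complex.ofReal_im _, hFpos x hx⟩
  · intro x hx
    simp only [hv]
    exact ⟨inv_pos.2 (hFpos x hx), by simp [hF, Real.cos_neg]⟩
  · refine strictMonoOn_of_deriv_pos (convex_Icc _ _) hcont fun x hx => ?_
    rw [interior_Icc] at hx
    exact (hd x ⟨hx.1, hx.2.le⟩).1
  · refine strictConvexOn_of_deriv2_pos (convex_Icc _ _) hcont fun x hx => ?_
    rw [interior_Icc] at hx
    exact (hd x ⟨hx.1, hx.2.le⟩).2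
end

section
/- Let N be a positive integer and let u : 𝕋 → ℝ be continuous, nonnegative, even, not identically zero, with support contained in [−π/(2N), π/(2N)]. Let v : [−N, N] → ℝ be v = 1/û, extended 2N-periodically to ℝ, and let a_k = (1/(2N)) ∫_{−N}^{N} v(t) e^{−iπ k t/N} dt be its Fourier coefficients (k ∈ ℤ). Then (−1)^k a_k > 0 for every k ∈ ℤ. -/
/-!
Put `F x = ∫ u(t) cos(xt) dt = û(x)` and `v = 1/F`. On `[-N, N]` the argument `xt` stays inside
`(-π/2, π/2)` for every `t` where `u` is nonzero (`cosInt_pos`), so `F > 0` and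
`F'' = -∫ t² u(t) cos(xt) dt < 0`. Hence `v'' = (2 F'² - F F'') / F³ > 0`: `v` is strictly convex.

For `k ≠ 0`, with `ω = πk/N` and `ε = (-1)^k = cos(ωN)`, two integrations by parts give
`ε ω² ∫ v cos(ωt) dt = ∫ v''(t) (1 - ε cos(ωt)) dt`, both integrals over `[-N, N]`; the right-hand
side is positive (`convex_cos_pos`). For `k = 0` the coefficient is the mean of `v > 0`. The
imaginary parts vanish because `v` is even.
-/

open Real MeasureTheory Set

/-- The cosine transform `x ↦ ∫_{-π}^{π} g(t) cos(xt) dt`. -/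
noncomputable def cosInt (g : ℝ → ℝ) (x : ℝ) : ℝ := ∫ t in (-π)..π, g t * Real.cos (x * t)

/-- The sine transform `x ↦ ∫_{-π}^{π} g(t) sin(xt) dt`. -/
noncomputable def sinInt (g : ℝ → ℝ) (x : ℝ) : ℝ := ∫ t in (-π)..π, g t * Real.sin (x * t)

lemma hasDerivAt_cosInt {g : ℝ → ℝ} (hg : Continuous g) (x : ℝ) :
    HasDerivAt (cosInt g) (-(sinInt (fun t => t * g t) x)) x := by
  have h := (intervalIntegral.hasDerivAt_integral_of_dominated_loc_of_deriv_le
    (μ := volume) (a := -π) (b := π) (s := univ) (x₀ := x)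
    (F := fun x t => g t * Real.cos (x * t))
    (F' := fun x t => -(t * g t * Real.sin (x * t)))
    (bound := fun t => |t * g t|) Filter.univ_mem
    (Filter.Eventually.of_forall fun y =>
      (by fun_prop : Continuous fun t => g t * Real.cos (y * t)).aestronglyMeasurable)
    ((by fun_prop : Continuous fun t => g t * Real.cos (x * t)).intervalIntegrable _ _)
    (by fun_prop : Continuous fun t => -(t * g t * Real.sin (x * t))).aestronglyMeasurable
    ?_ ((by fun_prop : Continuous fun t => |t * g t|).intervalIntegrable _ _) ?_).2
  · have e : -(sinInt (fun t => t * g t) x) = ∫ t in (-π)..π, -(t * g t * Real.sin (x * t)) := by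
      rw [intervalIntegral.integral_neg]; rfl
    rw [e]; exact h
  · refine Filter.Eventually.of_forall fun t _ y _ => ?_
    rw [norm_neg, norm_mul, Real.norm_eq_abs, Real.norm_eq_abs]
    exact mul_le_of_le_one_right (abs_nonneg _) (Real.abs_sin_le_one _)
  · refine Filter.Eventually.of_forall fun t _ y _ => ?_
    have := (((hasDerivAt_id y).mul_const t).cos).const_mul (g t)
    refine this.congr_deriv ?_
    simp only [id]; ring

lemma hasDerivAt_sinInt {g : ℝ → ℝ} (hg : Continuous g) (x : ℝ) :
    HasDerivAt (sinInt g) (cosInt (fun t => t * g t) x) x := by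
  refine (intervalIntegral.hasDerivAt_integral_of_dominated_loc_of_deriv_le
    (μ := volume) (a := -π) (b := π) (s := univ) (x₀ := x)
    (F := fun x t => g t * Real.sin (x * t))
    (F' := fun x t => t * g t * Real.cos (x * t))
    (bound := fun t => |t * g t|) Filter.univ_mem
    (Filter.Eventually.of_forall fun y =>
      (by fun_prop : Continuous fun t => g t * Real.sin (y * t)).aestronglyMeasurable)
    ((by fun_prop : Continuous fun t => g t * Real.sin (x * t)).intervalIntegrable _ _)
    (by fun_prop : Continuous fun t => t * g t * Real.cos (x * t)).aestronglyMeasurable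
    ?_ ((by fun_prop : Continuous fun t => |t * g t|).intervalIntegrable _ _) ?_).2
  · refine Filter.Eventually.of_forall fun t _ y _ => ?_
    rw [norm_mul, Real.norm_eq_abs, Real.norm_eq_abs]
    exact mul_le_of_le_one_right (abs_nonneg _) (Real.abs_cos_le_one _)
  · refine Filter.Eventually.of_forall fun t _ y _ => ?_
    have := (((hasDerivAt_id y).mul_const t).sin).const_mul (g t)
    refine this.congr_deriv ?_
    simp only [id]; ring

lemma continuous_cosInt {g : ℝ → ℝ} (hg : Continuous g) : Continuous (cosInt g) :=
  continuous_iff_continuousAt.2 fun x => (hasDerivAt_cosInt hg x).continuousAt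

lemma continuous_sinInt {g : ℝ → ℝ} (hg : Continuous g) : Continuous (sinInt g) :=
  continuous_iff_continuousAt.2 fun x => (hasDerivAt_sinInt hg x).continuousAt

/-- The support of the continuous function `g` is open, so it avoids the endpoints `±π/(2N)`, where
`cos(xt)` may vanish. -/
lemma cosInt_pos {N : ℕ} (hN : 0 < N) {g : ℝ → ℝ} (hg : Continuous g) (h0 : ∀ t, 0 ≤ g t)
    (hne : ∃ t, g t ≠ 0)
    (hs : Function.support g ⊆ Icc (-(π / (2 * N))) (π / (2 * N)))
    {x : ℝ} (hx : x ∈ Icc (-(N : ℝ)) N) : 0 < cosInt g x := by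
  have hN' : (1 : ℝ) ≤ N := by exact_mod_cast hN
  have hs' : Function.support g ⊆ Ioo (-(π / (2 * N))) (π / (2 * N)) := by
    rw [← interior_Icc]
    exact interior_maximal hs hg.isOpen_support
  have hcos : ∀ t, g t ≠ 0 → 0 < Real.cos (x * t) := by
    intro t ht
    have h1 : |t| < π / (2 * N) := abs_lt.2 (hs' ht)
    have h2 : |x| ≤ N := abs_le.2 hx
    have h3 : |x * t| < π / 2 := by
      rw [abs_mul]
      calc |x| * |t| ≤ N * |t| := by gcongr
        _ < N * (π / (2 * N)) := by gcongr
        _ = π / 2 := by field_simp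
    exact Real.cos_pos_of_mem_Ioo (abs_lt.1 h3)
  obtain ⟨t₀, ht₀⟩ := hne
  refine intervalIntegral.integral_pos (by linarith [Real.pi_pos])
    (by fun_prop) (fun t _ => ?_) ⟨t₀, ?_, ?_⟩
  · by_cases h : g t = 0
    · simp [h]
    · exact mul_nonneg (h0 t) (hcos t h).le
  · have h1 := hs ht₀
    have h2 : π / (2 * N) ≤ π := div_le_self Real.pi_pos.le (by linarith)
    exact ⟨by linarith [h1.1], by linarith [h1.2]⟩
  · exact mul_pos (lt_of_le_of_ne (h0 t₀) (Ne.symm ht₀)) (hcos t₀ ht₀)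

lemma fourierT_re {u : ℝ → ℝ} (hu : Continuous u) (x : ℝ) : (fourierT u x).re = cosInt u x := by
  have hc : Continuous fun t : ℝ =>
      Complex.exp (-(Complex.I) * (x : ℂ) * (t : ℂ)) * (u t : ℂ) := by fun_prop
  rw [fourierT, cosInt, intervalIntegral.integral_of_le (by linarith [Real.pi_pos])]
  have h := Complex.reCLM.integral_comp_comm
    (μ := volume.restrict (Set.Ioc (-π) π))
    ((hc.continuousOn.integrableOn_Icc (a := -π) (b := π) (μ := volume)).mono_set
      Ioc_subset_Icc_self)
  simp only [Complex.reCLM_apply] at h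
  rw [← h]
  congr 1
  ext t
  simp [Complex.exp_re, mul_comm]

/-- A strictly convex `C²` function on `[-N, N]` has `(-1)^k ∫ v cos(πkt/N) > 0` for `k ≠ 0`. -/
lemma convex_cos_pos {N : ℕ} (hN : 0 < N) {v v' v'' : ℝ → ℝ}
    (h1 : ∀ t ∈ Icc (-(N : ℝ)) N, HasDerivAt v (v' t) t)
    (h2 : ∀ t ∈ Icc (-(N : ℝ)) N, HasDerivAt v' (v'' t) t)
    (hc : ContinuousOn v'' (Icc (-(N : ℝ)) N))
    (hpos : ∀ t ∈ Icc (-(N : ℝ)) N, 0 < v'' t) {k : ℤ} (hk : k ≠ 0) :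
    0 < (-1 : ℝ) ^ k * ∫ t in (-(N : ℝ))..N, v t * Real.cos (π * k / N * t) := by
  have hN' : (0 : ℝ) < N := by exact_mod_cast hN
  have hk' : (k : ℝ) ≠ 0 := by exact_mod_cast hk
  have hle : -(N : ℝ) ≤ N := by linarith
  set ω : ℝ := π * k / N with hω
  set ε : ℝ := (-1 : ℝ) ^ k with hε
  have hω0 : ω ≠ 0 := by positivity
  have hε2 : ε = 1 ∨ ε = -1 := by
    rcases Int.even_or_odd k with h | h
    · left; exact h.neg_one_zpow
    · right; exact h.neg_one_zpow
  have hωN : ω * N = k * π := by rw [hω]; field_simp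
  have hcosN : Real.cos (ω * N) = ε := by rw [hωN, Real.cos_int_mul_pi]
  have hsinN : Real.sin (ω * N) = 0 := by rw [hωN, Real.sin_int_mul_pi]
  have hvc : ContinuousOn v (Icc (-(N : ℝ)) N) := fun t ht =>
    (h1 t ht).continuousAt.continuousWithinAt
  have hc1 : ContinuousOn (fun t => v'' t * (1 - ε * Real.cos (ω * t))) (Icc (-(N : ℝ)) N) :=
    hc.mul (by fun_prop)
  have hc2 : ContinuousOn (fun t => v t * Real.cos (ω * t)) (Icc (-(N : ℝ)) N) :=
    hvc.mul (by fun_prop)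
  have hi1 := hc1.intervalIntegrable_of_Icc (μ := volume) hle
  have hi2 := hc2.intervalIntegrable_of_Icc (μ := volume) hle
  -- Both integrations by parts at once: the integrand below has an explicit primitive, which
  -- vanishes at both endpoints.
  have key : ∫ t in (-(N : ℝ))..N, (v'' t * (1 - ε * Real.cos (ω * t))
      - ε * ω ^ 2 * (v t * Real.cos (ω * t))) = 0 := by
    rw [intervalIntegral.integral_eq_sub_of_hasDerivAt
      (f := fun t => v' t * (1 - ε * Real.cos (ω * t)) - ε * ω * (v t * Real.sin (ω * t)))
      (fun t ht => ?_) (hi1.sub (hi2.const_mul _))]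
    · simp only [mul_neg, Real.cos_neg, Real.sin_neg, hcosN, hsinN]
      rcases hε2 with h | h <;> rw [h] <;> ring
    · rw [uIcc_of_le hle] at ht
      have hl : HasDerivAt (fun t : ℝ => ω * t) ω t := by
        simpa using (hasDerivAt_id t).const_mul ω
      have := ((h2 t ht).mul ((hl.cos.const_mul ε).const_sub 1)).sub
        (((h1 t ht).mul hl.sin).const_mul (ε * ω))
      refine this.congr_deriv ?_
      ring
  rw [intervalIntegral.integral_sub hi1 (hi2.const_mul _),
    intervalIntegral.integral_const_mul] at key
  have hfac : ∀ t, 0 ≤ 1 - ε * Real.cos (ω * t) := by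
    intro t
    rcases hε2 with h | h <;> rw [h] <;>
      linarith [Real.cos_le_one (ω * t), Real.neg_one_le_cos (ω * t)]
  have hp : 0 < ∫ t in (-(N : ℝ))..N, v'' t * (1 - ε * Real.cos (ω * t)) := by
    -- At `t = N/(2k)` the cosine vanishes, whatever the parity of `k`.
    have hmem : (N : ℝ) / (2 * k) ∈ Icc (-(N : ℝ)) N := by
      apply abs_le.1
      have h1k : (1 : ℝ) ≤ |(k : ℝ)| := by exact_mod_cast Int.one_le_abs hk
      rw [abs_div, abs_mul, abs_of_pos hN', abs_two]
      exact div_le_self hN'.le (by linarith)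
    refine intervalIntegral.integral_pos (by linarith) hc1
      (fun t ht => mul_nonneg (hpos t (Ioc_subset_Icc_self ht)).le (hfac t))
      ⟨(N : ℝ) / (2 * k), hmem, ?_⟩
    have : ω * (N / (2 * k)) = π / 2 := by rw [hω]; field_simp
    rw [this, Real.cos_pi_div_two]
    simpa using hpos _ hmem
  have hω2 : 0 < ω ^ 2 := by positivity
  have : 0 < ω ^ 2 * (ε * ∫ t in (-(N : ℝ))..N, v t * Real.cos (ω * t)) := by linarith
  exact pos_of_mul_pos_right this hω2.le

/-- The Fourier coefficients a_k = (1/(2N)) ∫_{-N}^{N} v(t) e^{-iπkt/N} dt of the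
2N-periodic extension of v = 1/û satisfy (-1)^k a_k > 0 (each a_k being real). -/
theorem fourier_coefficients_alternate
    (N : ℕ) (hN : 0 < N) (u : ℝ → ℝ)
    (hu_cont : Continuous u) (hu_nonneg : ∀ t, 0 ≤ u t)
    (hu_even : ∀ t, u (-t) = u t) (hu_ne : u ≠ 0)
    (hu_supp : Function.support u ⊆ Icc (-(π / (2 * N))) (π / (2 * N)))
    (a : ℤ → ℂ)
    (ha : ∀ k : ℤ, a k = (1 / (2 * (N : ℂ))) *
      ∫ t in (-(N : ℝ))..(N : ℝ),
        (vFun u t : ℂ) * Complex.exp (-(Complex.I) * π * (k : ℂ) * (t : ℂ) / (N : ℂ))) :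
    ∀ k : ℤ, 0 < ((-1 : ℂ) ^ k * a k).re ∧ ((-1 : ℂ) ^ k * a k).im = 0 := by
  have hN' : (0 : ℝ) < N := by exact_mod_cast hN
  have hle : -(N : ℝ) ≤ N := by linarith
  have hvF : vFun u = fun x => (cosInt u x)⁻¹ := by
    ext x; rw [vFun, fourierT_re hu_cont]
  have hc1 : Continuous fun t => t * u t := by fun_prop
  have hc2 : Continuous fun t => t * (t * u t) := by fun_prop
  have hFpos : ∀ x ∈ Icc (-(N : ℝ)) N, 0 < cosInt u x := fun x hx =>
    cosInt_pos hN hu_cont hu_nonneg (Function.ne_iff.1 hu_ne) hu_supp hx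
  have hGpos : ∀ x ∈ Icc (-(N : ℝ)) N, 0 < cosInt (fun t => t * (t * u t)) x := by
    intro x hx
    refine cosInt_pos hN hc2 (fun t => ?_) ?_ (fun t ht => hu_supp ?_) hx
    · rw [← mul_assoc]; exact mul_nonneg (mul_self_nonneg t) (hu_nonneg t)
    · -- `t² u(t)` is not identically zero: the open support of `u` is not contained in `{0}`.
      obtain ⟨t, ht, ht0⟩ := (dense_compl_singleton (0 : ℝ)).inter_open_nonempty _
        hu_cont.isOpen_support (Function.support_nonempty_iff.2 hu_ne)
      exact ⟨t, mul_ne_zero ht0 (mul_ne_zero ht0 ht)⟩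
    · intro h
      exact ht (by simp [h])
  have hF1 := hasDerivAt_cosInt hu_cont
  have hF2 := hasDerivAt_sinInt hc1
  have hvpos : ∀ x ∈ Icc (-(N : ℝ)) N, 0 < vFun u x := by
    intro x hx; rw [hvF]; exact inv_pos.2 (hFpos x hx)
  have hvcont : ContinuousOn (vFun u) (Icc (-(N : ℝ)) N) := by
    rw [hvF]
    exact (continuous_cosInt hu_cont).continuousOn.inv₀ fun x hx => (hFpos x hx).ne'
  have hveven : ∀ x, vFun u (-x) = vFun u x := by
    intro x; simp [hvF, cosInt]
  have hcos : ∀ k : ℤ,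
      0 < (-1 : ℝ) ^ k * ∫ t in (-(N : ℝ))..N, vFun u t * Real.cos (π * k / N * t) := by
    intro k
    by_cases hk : k = 0
    · subst hk
      simp only [zpow_zero, one_mul, Int.cast_zero, mul_zero, zero_div, zero_mul, Real.cos_zero,
        mul_one]
      exact intervalIntegral.integral_pos (by linarith) hvcont
        (fun t ht => (hvpos t (Ioc_subset_Icc_self ht)).le)
        ⟨0, ⟨by linarith, by linarith⟩, hvpos 0 ⟨by linarith, by linarith⟩⟩
    · refine convex_cos_pos hN
        (v' := fun x => sinInt (fun t => t * u t) x / cosInt u x ^ 2)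
        (v'' := fun x => (cosInt (fun t => t * (t * u t)) x * cosInt u x
          + 2 * sinInt (fun t => t * u t) x ^ 2) / cosInt u x ^ 3) ?_ ?_ ?_ ?_ hk
      · intro t ht
        rw [hvF]
        have := (hF1 t).inv (hFpos t ht).ne'
        exact this.congr_deriv (by rw [neg_neg])
      · intro t ht
        have h0 := (hFpos t ht).ne'
        have := (hF2 t).div ((hF1 t).pow 2) (pow_ne_zero 2 h0)
        refine this.congr_deriv ?_
        simp only [Pi.pow_apply]
        field_simp
        ring
      · have e1 := continuous_cosInt hc2
        have e2 := continuous_cosInt hu_cont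
        have e3 := continuous_sinInt hc1
        exact ContinuousOn.div (by fun_prop) (by fun_prop)
          fun x hx => pow_ne_zero 3 (hFpos x hx).ne'
      · intro t ht
        have p1 := hFpos t ht
        have p2 := hGpos t ht
        positivity
  have hsin : ∀ ω : ℝ, ∫ t in (-(N : ℝ))..N, vFun u t * Real.sin (ω * t) = 0 := by
    intro ω
    have h := intervalIntegral.integral_comp_neg (a := -(N : ℝ)) (b := N)
      (fun t => vFun u t * Real.sin (ω * t))
    simp only [hveven, mul_neg, Real.sin_neg, neg_neg, intervalIntegral.integral_neg] at h
    linarith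
  intro k
  have hak : a k = ((1 / (2 * N) *
      ∫ t in (-(N : ℝ))..N, vFun u t * Real.cos (π * k / N * t) : ℝ) : ℂ) := by
    have e : ∀ t : ℝ, (vFun u t : ℂ) *
        Complex.exp (-(Complex.I) * π * (k : ℂ) * (t : ℂ) / (N : ℂ)) =
        ((vFun u t * Real.cos (π * k / N * t) : ℝ) : ℂ)
          - Complex.I * ((vFun u t * Real.sin (π * k / N * t) : ℝ) : ℂ) := by
      intro t
      have : -(Complex.I) * π * (k : ℂ) * (t : ℂ) / (N : ℂ)
          = -((π * k / N * t : ℝ) : ℂ) * Complex.I := by push_cast; ring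
      rw [this, Complex.exp_mul_I, Complex.cos_neg, Complex.sin_neg]
      push_cast
      ring
    have i1 : IntervalIntegrable
        (fun t => ((vFun u t * Real.cos (π * k / N * t) : ℝ) : ℂ)) volume
        (-(N : ℝ)) N :=
      (Complex.continuous_ofReal.comp_continuousOn
        (hvcont.mul (by fun_prop))).intervalIntegrable_of_Icc hle
    have i2 : IntervalIntegrable
        (fun t => ((vFun u t * Real.sin (π * k / N * t) : ℝ) : ℂ)) volume
        (-(N : ℝ)) N :=
      (Complex.continuous_ofReal.comp_continuousOn
        (hvcont.mul (by fun_prop))).intervalIntegrable_of_Icc hle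
    rw [ha k]
    simp only [e]
    rw [intervalIntegral.integral_sub i1 (i2.const_mul _),
      intervalIntegral.integral_const_mul, intervalIntegral.integral_ofReal,
      intervalIntegral.integral_ofReal, hsin]
    push_cast
    ring
  have hfin : (-1 : ℂ) ^ k * a k = (((-1 : ℝ) ^ k * (1 / (2 * N) *
      ∫ t in (-(N : ℝ))..N, vFun u t * Real.cos (π * k / N * t)) : ℝ) : ℂ) := by
    rw [hak]; push_cast; ring
  rw [hfin]
  refine ⟨?_, Complex.ofReal_im _⟩
  rw [Complex.ofReal_re, mul_left_comm]
  exact mul_pos (by positivity) (hcos k)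
end

section
/- Let N > 0 be a real number, k a positive integer, and let g : [0, N] → ℝ be continuous, positive, and strictly increasing. For j = 0, 1, …, k−1 set I_j = ∫_{Nj/k}^{N(j+1)/k} g(t) sin(π k t/N) dt. Then (−1)^j I_j > 0 and |I_j| < |I_{j+1}| for all admissible j; consequently (−1)^{k−1} ∫_0^N g(t) sin(π k t/N) dt > 0. -/
/-!
With `h = N / k`, translating the `j`-th half-period back to `[0, h]` and using
`sin (x + j π) = (-1) ^ j * sin x` turns `(-1) ^ j * I j` into
`A j = ∫ t in 0..h, g (t + j h) * sin (π k t / N)` (`signed_half_period_eq`). The sine is positive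
on `(0, h)`, so positivity of `g` gives `0 < A j` and strict monotonicity gives
`A j < A (j + 1)`. The last claim is the alternating-sum estimate `alternating_sum_bounds`: a sum
of alternating terms whose absolute values increase has the sign of its last term.
-/

open Real MeasureTheory Set

/-- The signed partial sums `S m = (-1) ^ m * ∑ j ≤ m, (-1) ^ j * A j` satisfy
`S (m + 1) = A (m + 1) - S m`. The upper bound `S m ≤ A m` is what makes the induction close. -/
lemma alternating_sum_bounds (A : ℕ → ℝ) (m : ℕ) (hpos : ∀ j ≤ m, 0 < A j)
    (hlt : ∀ j < m, A j < A (j + 1)) :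
    0 < (-1 : ℝ) ^ m * ∑ j ∈ Finset.range (m + 1), (-1 : ℝ) ^ j * A j ∧
      (-1 : ℝ) ^ m * ∑ j ∈ Finset.range (m + 1), (-1 : ℝ) ^ j * A j ≤ A m := by
  induction m with
  | zero => simpa using hpos 0 le_rfl
  | succ m ih =>
    obtain ⟨h1, h2⟩ := ih (fun j hj => hpos j (by omega)) (fun j hj => hlt j (by omega))
    have h3 := hlt m (by omega)
    have key : (-1 : ℝ) ^ (m + 1) * ∑ j ∈ Finset.range (m + 1 + 1), (-1 : ℝ) ^ j * A j
        = A (m + 1) - (-1 : ℝ) ^ m * ∑ j ∈ Finset.range (m + 1), (-1 : ℝ) ^ j * A j := by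
      rw [Finset.sum_range_succ, mul_add, ← mul_assoc, ← mul_pow, pow_succ]
      norm_num
      ring
    rw [key]
    constructor <;> linarith

/-- The `j`-th half-period integral, translated to `[0, N / k]`. -/
lemma signed_half_period_eq (N : ℝ) (hN : 0 < N) (k : ℕ) (hk : 0 < k) (g : ℝ → ℝ) (j : ℕ) :
    (-1 : ℝ) ^ j * ∫ t in (N * j / k)..(N * (j + 1) / k), g t * Real.sin (π * k * t / N) =
      ∫ t in (0 : ℝ)..(N / k), g (t + N * j / k) * Real.sin (π * k * t / N) := by
  have hk' : (0 : ℝ) < k := by exact_mod_cast hk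
  have h := intervalIntegral.integral_comp_add_right
    (fun t => g t * Real.sin (π * k * t / N)) (N * j / k) (a := 0) (b := N / k)
  have e : N / k + N * j / k = N * (j + 1) / k := by ring
  rw [zero_add, e] at h
  rw [← h, ← intervalIntegral.integral_const_mul]
  refine intervalIntegral.integral_congr fun t _ => ?_
  have e2 : π * k * (t + N * j / k) / N = π * k * t / N + j * π := by
    field_simp
  have e3 : (-1 : ℝ) ^ j * (-1) ^ j = 1 := by rw [← mul_pow]; norm_num
  simp only [e2, Real.sin_add_nat_mul_pi]
  linear_combination (g (t + N * j / k) * Real.sin (π * k * t / N)) * e3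

/-- Integration against the first half-period of the sine preserves strict positivity. -/
lemma half_period_integral_pos (N : ℝ) (hN : 0 < N) (k : ℕ) (hk : 0 < k) (f : ℝ → ℝ)
    (hf : ContinuousOn f (Icc 0 (N / k))) (hpos : ∀ t ∈ Icc 0 (N / k), 0 < f t) :
    0 < ∫ t in (0 : ℝ)..(N / k), f t * Real.sin (π * k * t / N) := by
  have hk' : (0 : ℝ) < k := by exact_mod_cast hk
  have hh : 0 < N / k := by positivity
  refine intervalIntegral.intervalIntegral_pos_of_pos_on ?_ ?_ hh
  · refine ContinuousOn.intervalIntegrable ?_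
    rw [uIcc_of_le hh.le]
    exact hf.mul (by fun_prop)
  · intro t ht
    have h0 : 0 < t := ht.1
    refine mul_pos (hpos t ⟨ht.1.le, ht.2.le⟩) (Real.sin_pos_of_pos_of_lt_pi (by positivity) ?_)
    have h1 : t * k < N := (lt_div_iff₀ hk').1 ht.2
    rw [div_lt_iff₀ hN]
    nlinarith [Real.pi_pos]

/-- For a continuous, positive, strictly increasing g on [0, N], the integrals
I_j = ∫_{Nj/k}^{N(j+1)/k} g(t) sin(πkt/N) dt satisfy (-1)^j I_j > 0 and |I_j| < |I_{j+1}|;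
consequently (-1)^{k-1} ∫_0^N g(t) sin(πkt/N) dt > 0. -/
theorem alternating_half_period_integrals
    (N : ℝ) (hN : 0 < N) (k : ℕ) (hk : 0 < k)
    (g : ℝ → ℝ) (hg_cont : ContinuousOn g (Icc 0 N))
    (hg_pos : ∀ t ∈ Icc (0 : ℝ) N, 0 < g t)
    (hg_mono : StrictMonoOn g (Icc 0 N))
    (I : ℕ → ℝ)
    (hI : ∀ j : ℕ, I j = ∫ t in (N * j / k)..(N * (j + 1) / k),
      g t * Real.sin (π * k * t / N)) :
    (∀ j : ℕ, j < k → 0 < (-1 : ℝ) ^ j * I j) ∧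
    (∀ j : ℕ, j + 1 < k → |I j| < |I (j + 1)|) ∧
    0 < (-1 : ℝ) ^ (k - 1) * ∫ t in (0 : ℝ)..N, g t * Real.sin (π * k * t / N) := by
  have hk' : (0 : ℝ) < k := by exact_mod_cast hk
  have hh : 0 < N / k := by positivity
  have hmem : ∀ j : ℕ, j < k → ∀ t ∈ Icc (0 : ℝ) (N / k), t + N * j / k ∈ Icc 0 N := by
    intro j hj t ht
    have hj' : (j : ℝ) + 1 ≤ k := by exact_mod_cast hj
    refine ⟨add_nonneg ht.1 (by positivity), ?_⟩
    calc t + N * j / k ≤ N / k + N * j / k := by linarith [ht.2]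
      _ = N * (j + 1) / k := by ring
      _ ≤ N := by
        rw [div_le_iff₀ hk']
        exact mul_le_mul_of_nonneg_left hj' hN.le
  have hcont : ∀ j : ℕ, j < k → ContinuousOn (fun t => g (t + N * j / k)) (Icc 0 (N / k)) :=
    fun j hj => hg_cont.comp (by fun_prop) (hmem j hj)
  have hA : ∀ j : ℕ, (-1 : ℝ) ^ j * I j =
      ∫ t in (0 : ℝ)..(N / k), g (t + N * j / k) * Real.sin (π * k * t / N) :=
    fun j => by rw [hI, signed_half_period_eq N hN k hk]
  have hpos : ∀ j : ℕ, j < k → 0 < (-1 : ℝ) ^ j * I j := by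
    intro j hj
    rw [hA]
    exact half_period_integral_pos N hN k hk _ (hcont j hj)
      fun t ht => hg_pos _ (hmem j hj t ht)
  have hint : ∀ j : ℕ, j < k → IntervalIntegrable
      (fun t => g (t + N * j / k) * Real.sin (π * k * t / N)) volume 0 (N / k) := by
    intro j hj
    refine ContinuousOn.intervalIntegrable ?_
    rw [uIcc_of_le hh.le]
    exact (hcont j hj).mul (by fun_prop)
  have hlt : ∀ j : ℕ, j + 1 < k → (-1 : ℝ) ^ j * I j < (-1 : ℝ) ^ (j + 1) * I (j + 1) := by
    intro j hj
    rw [hA, hA, ← sub_pos, ← intervalIntegral.integral_sub (hint _ hj) (hint _ (by omega))]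
    simp only [← sub_mul]
    refine half_period_integral_pos N hN k hk _
      ((hcont _ hj).sub (hcont _ (by omega))) fun t ht => sub_pos.2 ?_
    refine hg_mono (hmem _ (by omega) t ht) (hmem _ hj t ht) ?_
    have e : N * ((j + 1 : ℕ) : ℝ) / k = N * j / k + N / k := by push_cast; ring
    rw [e]
    linarith
  have habs : ∀ j : ℕ, j < k → |I j| = (-1 : ℝ) ^ j * I j := by
    intro j hj
    rw [← abs_of_pos (hpos j hj), abs_mul, abs_pow]
    simp
  refine ⟨hpos, fun j hj => ?_, ?_⟩
  · rw [habs j (by omega), habs _ hj]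
    exact hlt j hj
  · have hsum : ∫ t in (0 : ℝ)..N, g t * Real.sin (π * k * t / N) =
        ∑ j ∈ Finset.range k, I j := by
      have h := intervalIntegral.sum_integral_adjacent_intervals (μ := volume)
        (f := fun t => g t * Real.sin (π * k * t / N)) (a := fun j : ℕ => N * j / k) (n := k) ?_
      · have e : N * (k : ℝ) / k = N := by field_simp
        simp only [Nat.cast_zero, mul_zero, zero_div, e] at h
        rw [← h]
        refine Finset.sum_congr rfl fun j _ => ?_
        rw [hI]
        push_cast
        rfl
      · intro j hj
        refine ContinuousOn.intervalIntegrable ?_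
        refine (hg_cont.mul (by fun_prop)).mono ?_
        refine ordConnected_Icc.uIcc_subset ?_ ?_
        · simpa using hmem j hj 0 ⟨le_rfl, hh.le⟩
        · convert hmem j hj (N / k) ⟨hh.le, le_rfl⟩ using 1
          push_cast
          ring
    obtain ⟨m, rfl⟩ : ∃ m, k = m + 1 := ⟨k - 1, by omega⟩
    have h := (alternating_sum_bounds (fun j => (-1 : ℝ) ^ j * I j) m
      (fun j hj => hpos j (by omega)) (fun j hj => hlt j (by omega))).1
    have e : ∀ j : ℕ, (-1 : ℝ) ^ j * ((-1 : ℝ) ^ j * I j) = I j := fun j => by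
      rw [← mul_assoc, ← mul_pow]
      norm_num
    simp only [e] at h
    rw [hsum]
    simpa using h
end

section
/- Let N be a positive integer, 1 ≤ p < ∞ with 1/p + 1/q = 1, and let u : 𝕋 → ℝ be continuous, nonnegative, even, not identically zero, supported in [−π/(2N), π/(2N)], and normalized so that ‖u‖_{L^q(𝕋)} = 1. Let A_u^{−1} be the inverse on T_N of the convolution operator s ↦ s ∗ u. Then for every trigonometric polynomial s of degree at most N and every x ∈ 𝕋, |s(x)|^p ≤ ∫_{−π/(2N)}^{π/(2N)} |A_u^{−1}(s)(x − t)|^p dt. -/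
open Real MeasureTheory Set ENNReal

/-!
The value `s x` is the integral of `S (x - t) * u t` over `[-a, a]`, `a = π / (2N)`, because `u`
vanishes elsewhere in `(-π, π]`. Hölder's inequality on `[-a, a]` bounds it by the `L^p` norm of
`t ↦ S (x - t)` there, times `‖u‖_q ≤ 1`; raising to the power `p` gives the claim. Hölder is used in
its `eLpNorm` form, which treats `p = 1`, `q = ∞` together with the other exponents.
-/

/-- Pointwise bound: |s(x)|^p ≤ ∫_{-π/(2N)}^{π/(2N)} |A_u^{-1}(s)(x-t)|^p dt, where
A_u^{-1}(s) = S is the (unique) trigonometric polynomial of degree at most N with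
S ∗ u = s, and ‖u‖_{L^q(𝕋)} = 1 with 1/p + 1/q = 1. -/
theorem pointwise_bound_by_inverse
    (N : ℕ) (hN : 0 < N) (p : ℝ) (hp : 1 ≤ p) (q : ℝ≥0∞)
    (hpq : (ENNReal.ofReal p)⁻¹ + q⁻¹ = 1)
    (u : ℝ → ℝ)
    (hu_cont : Continuous u) (hu_nonneg : ∀ t, 0 ≤ u t)
    (hu_even : ∀ t, u (-t) = u t) (hu_ne : u ≠ 0)
    (hu_supp : Function.support u ⊆ Icc (-(π / (2 * N))) (π / (2 * N)))
    (hu_norm : eLpNorm (fun t => u t) q (volume.restrict (Ioc (-π) π)) = 1)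
    (c d : ℤ → ℂ) (s S : ℝ → ℂ)
    (hs : ∀ y : ℝ, s y = ∑ k ∈ Finset.Icc (-(N : ℤ)) (N : ℤ),
      c k * Complex.exp (Complex.I * (k : ℂ) * (y : ℂ)))
    (hS : ∀ y : ℝ, S y = ∑ k ∈ Finset.Icc (-(N : ℤ)) (N : ℤ),
      d k * Complex.exp (Complex.I * (k : ℂ) * (y : ℂ)))
    (hinv : ∀ y : ℝ, (∫ t in Ioc (-π) π, S (y - t) * (u t : ℂ)) = s y) :
    ∀ x : ℝ, ‖s x‖ ^ p ≤ ∫ t in (-(π / (2 * N)))..(π / (2 * N)), ‖S (x - t)‖ ^ p := by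
  intro x
  have hN1 : (1 : ℝ) ≤ N := by exact_mod_cast hN
  set a : ℝ := π / (2 * N) with ha
  have ha0 : 0 ≤ a := by positivity
  have haπ : a < π := by
    rw [ha, div_lt_iff₀ (by positivity)]
    nlinarith [Real.pi_pos]
  have hsub : Icc (-a) a ⊆ Ioc (-π) π := fun t ht => ⟨by linarith [ht.1], by linarith [ht.2]⟩
  have hScont : Continuous S := by
    rw [funext hS]
    fun_prop
  have hgcont : Continuous fun t => S (x - t) := hScont.comp (by fun_prop)
  have hp0 : 0 < p := by linarith
  have hsx : s x = ∫ t in Icc (-a) a, S (x - t) * (u t : ℂ) := by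
    rw [← hinv x]
    refine setIntegral_eq_of_subset_of_forall_sdiff_eq_zero measurableSet_Ioc hsub fun t ht => ?_
    have : u t = 0 := by
      by_contra h
      exact ht.2 (hu_supp h)
    simp [this]
  have hconj : ENNReal.HolderTriple (ENNReal.ofReal p) q 1 := ⟨by simpa using hpq⟩
  have hholder : ‖s x‖ₑ ≤ eLpNorm (fun t => S (x - t)) (ENNReal.ofReal p)
      (volume.restrict (Icc (-a) a)) := by
    calc ‖s x‖ₑ ≤ ∫⁻ t in Icc (-a) a, ‖S (x - t) * (u t : ℂ)‖ₑ := by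
          rw [hsx]
          exact enorm_integral_le_lintegral_enorm _
      _ = eLpNorm ((fun t => S (x - t)) • fun t => (u t : ℂ)) 1
            (volume.restrict (Icc (-a) a)) := by
          rw [eLpNorm_one_eq_lintegral_enorm]
          rfl
      _ ≤ eLpNorm (fun t => S (x - t)) (ENNReal.ofReal p) (volume.restrict (Icc (-a) a)) *
            eLpNorm (fun t => (u t : ℂ)) q (volume.restrict (Icc (-a) a)) :=
          eLpNorm_smul_le_mul_eLpNorm
            (Complex.continuous_ofReal.comp hu_cont).aestronglyMeasurable
            hgcont.aestronglyMeasurable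
      _ ≤ eLpNorm (fun t => S (x - t)) (ENNReal.ofReal p) (volume.restrict (Icc (-a) a)) * 1 := by
          gcongr
          rw [← hu_norm]
          refine (eLpNorm_mono_measure _ (Measure.restrict_mono hsub le_rfl)).trans_eq ?_
          exact eLpNorm_congr_norm_ae (.of_forall fun t => by simp)
      _ = _ := mul_one _
  rw [eLpNorm_eq_lintegral_rpow_enorm_toReal (by simpa using hp0) ENNReal.ofReal_ne_top,
    ENNReal.toReal_ofReal hp0.le, one_div, ENNReal.le_rpow_inv_iff hp0] at hholder
  have hFcont : Continuous fun t => ‖S (x - t)‖ ^ p :=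
    hgcont.norm.rpow_const fun _ => Or.inr hp0.le
  have hnn : 0 ≤ ∫ t in Icc (-a) a, ‖S (x - t)‖ ^ p := integral_nonneg fun t => by positivity
  rw [intervalIntegral.integral_of_le (by linarith), ← integral_Icc_eq_integral_Ioc,
    ← ENNReal.ofReal_le_ofReal_iff hnn,
    ofReal_integral_eq_lintegral_ofReal (hFcont.continuousOn.integrableOn_Icc)
      (.of_forall fun t => by positivity)]
  simpa only [← ENNReal.ofReal_rpow_of_nonneg (norm_nonneg _) hp0.le, ofReal_norm] using hholder
end
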